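/- arXiv:2602.10671 — 16 statements merged into one kernel-verified Lean document; each statement's English description precedes it below -/
import Mathlib

section
/- Let ((A,∘),P) be an averaging pre-Lie algebra over a field k of characteristic 0. Define a bilinear bracket on A by [x,y]_P := P(x)∘y − y∘P(x). Then (A,[·,·]_P) is a (left) Leibniz algebra, i.e. [[x,y]_P,z]_P + [y,[x,z]_P]_P = [x,[y,z]_P]_P for all x,y,z ∈ A. -/
/-- The bracket `[x,y]_P := P(x)∘y − y∘P(x)` induced by an averaging operator `P`
on a pre-Lie algebra `(A,∘)`. -/
def bracketP {k A : Type*} [Field k] [AddCommGroup A] [Module k A]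
    (mul : A →ₗ[k] A →ₗ[k] A) (P : A →ₗ[k] A) (x y : A) : A :=
  mul (P x) y - mul y (P x)

/-- Let `((A,∘),P)` be an averaging pre-Lie algebra over a field `k` of characteristic 0.
Then `(A,[·,·]_P)` is a (left) Leibniz algebra. -/
theorem induced_Leibniz {k A : Type*} [Field k] [CharZero k] [AddCommGroup A] [Module k A]
    (mul : A →ₗ[k] A →ₗ[k] A) (P : A →ₗ[k] A)
    (hpre : ∀ x y z : A,
      mul (mul x y) z - mul x (mul y z) = mul (mul y x) z - mul y (mul x z))
    (havg1 : ∀ x y : A, mul (P x) (P y) = P (mul (P x) y))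
    (havg2 : ∀ x y : A, mul (P x) (P y) = P (mul x (P y))) :
    ∀ x y z : A,
      bracketP mul P (bracketP mul P x y) z + bracketP mul P y (bracketP mul P x z)
        = bracketP mul P x (bracketP mul P y z) := by
  intro x y z
  have hP : P (mul (P x) y - mul y (P x)) = mul (P x) (P y) - mul (P y) (P x) := by
    rw [map_sub, ← havg1, ← havg2]
  have h1 := hpre (P x) (P y) z
  have h2 := hpre (P y) z (P x)
  have h3 := hpre z (P x) (P y)
  simp only [bracketP, hP, map_sub, LinearMap.sub_apply]
  linear_combination (norm := abel) h1 + h2 + h3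
end

section
/- Let ((A,∘),P) be an averaging pre-Lie algebra, (V,ρ,φ) a representation of the pre-Lie algebra (A,∘), and α : V → V a linear map. Define on A ⊕ V the product (x+u)∘♥(y+v) := x∘y + ρ(x)v + φ(y)u and the linear map P_{A⊕V}(x+v) := P(x) + α(v). Then (A ⊕ V, ∘♥, P_{A⊕V}) is an averaging pre-Lie algebra if and only if ((V,ρ,φ),α) is a representation of the averaging pre-Lie algebra ((A,∘),P). -/
namespace Stmt1

variable {k A V : Type*} [Field k] [CharZero k]
  [AddCommGroup A] [Module k A] [AddCommGroup V] [Module k V]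

/-- The semidirect product multiplication `(x+u) ∘♥ (y+v) = x∘y + ρ(x)v + φ(y)u` on `A ⊕ V`. -/
def circH (mul : A →ₗ[k] A →ₗ[k] A) (ρ φ : A →ₗ[k] Module.End k V)
    (p q : A × V) : A × V :=
  (mul p.1 q.1, ρ p.1 q.2 + φ q.1 p.2)

/-- The map `P_{A⊕V}(x+v) = P(x) + α(v)` on `A ⊕ V`. -/
def PH (P : A →ₗ[k] A) (α : V →ₗ[k] V) (p : A × V) : A × V := (P p.1, α p.2)

/-- Let `((A,∘),P)` be an averaging pre-Lie algebra, `(V,ρ,φ)` a representation of the pre-Lie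
algebra `(A,∘)` and `α : V → V` a linear map.  Then `(A ⊕ V, ∘♥, P_{A⊕V})` is an averaging
pre-Lie algebra if and only if `((V,ρ,φ),α)` is a representation of `((A,∘),P)`. -/
theorem semidirect_iff_rep (mul : A →ₗ[k] A →ₗ[k] A) (P : A →ₗ[k] A)
    (ρ φ : A →ₗ[k] Module.End k V) (α : V →ₗ[k] V)
    (hpre : ∀ x y z : A,
      mul (mul x y) z - mul x (mul y z) = mul (mul y x) z - mul y (mul x z))
    (havg1 : ∀ x y : A, mul (P x) (P y) = P (mul (P x) y))
    (havg2 : ∀ x y : A, mul (P x) (P y) = P (mul x (P y)))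
    (hrep1 : ∀ (x y : A) (v : V), ρ (mul x y - mul y x) v = ρ x (ρ y v) - ρ y (ρ x v))
    (hrep2 : ∀ (x y : A) (v : V),
      φ (mul x y) v = ρ x (φ y v) - φ y (ρ x v) + φ y (φ x v)) :
    ((∀ p q r : A × V,
        circH mul ρ φ (circH mul ρ φ p q) r - circH mul ρ φ p (circH mul ρ φ q r)
          = circH mul ρ φ (circH mul ρ φ q p) r - circH mul ρ φ q (circH mul ρ φ p r)) ∧
      (∀ p q : A × V,
        circH mul ρ φ (PH P α p) (PH P α q) = PH P α (circH mul ρ φ (PH P α p) q) ∧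
        circH mul ρ φ (PH P α p) (PH P α q) = PH P α (circH mul ρ φ p (PH P α q))))
      ↔
    ((∀ (x : A) (v : V), ρ (P x) (α v) = α (ρ (P x) v) ∧ α (ρ (P x) v) = α (ρ x (α v))) ∧
      (∀ (x : A) (v : V), φ (P x) (α v) = α (φ (P x) v) ∧ α (φ (P x) v) = α (φ x (α v)))) := by
  constructor
  · rintro ⟨-, h⟩
    refine ⟨fun x v => ?_, fun x v => ?_⟩
    · obtain ⟨h1, h2⟩ := h (x, 0) (0, v)
      have e1 := congrArg Prod.snd h1
      have e2 := congrArg Prod.snd h2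
      simp [circH, PH] at e1 e2
      exact ⟨e1, e1.symm.trans e2⟩
    · obtain ⟨h1, h2⟩ := h (0, v) (x, 0)
      have e1 := congrArg Prod.snd h1
      have e2 := congrArg Prod.snd h2
      simp [circH, PH] at e1 e2
      exact ⟨e2, e2.symm.trans e1⟩
  · rintro ⟨hρ, hφ⟩
    refine ⟨?_, ?_⟩
    · rintro ⟨x, u⟩ ⟨y, v⟩ ⟨z, w⟩
      refine Prod.ext (hpre x y z) ?_
      have h1 := hrep1 x y w
      rw [map_sub, LinearMap.sub_apply, sub_eq_iff_eq_add] at h1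
      simp only [circH, Prod.snd_sub, map_add, hrep2, h1]
      abel
    · rintro ⟨x, u⟩ ⟨y, v⟩
      refine ⟨Prod.ext (havg1 x y) ?_, Prod.ext (havg2 x y) ?_⟩
      · simp only [circH, PH, map_add]
        rw [(hρ x v).1, (hφ y u).1, (hφ y u).2]
      · simp only [circH, PH, map_add]
        rw [(hρ x v).1, (hρ x v).2, (hφ y u).1]

end Stmt1
end

section
/- Let ((A,∘),P) be an averaging pre-Lie algebra, (V,ρ,φ) a finite-dimensional representation of the pre-Lie algebra (A,∘), and β : V → V a linear map. Then ((V*, ρ*−φ*, −φ*), β*) is a representation of the averaging pre-Lie algebra ((A,∘),P) if and only if for all x ∈ A and v ∈ V one has ρ(P(x))β(v) = β(ρ(P(x))v) = β(ρ(x)β(v)) and φ(P(x))β(v) = β(φ(P(x))v) = β(φ(x)β(v)). -/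
namespace Stmt2

variable {k A V : Type*} [Field k] [CharZero k]
  [AddCommGroup A] [Module k A] [AddCommGroup V] [Module k V]

/-- `(V,ρ,φ)` is a representation of the pre-Lie algebra `(A,∘)`. -/
def IsRep (mul : A →ₗ[k] A →ₗ[k] A) (ρ φ : A →ₗ[k] Module.End k V) : Prop :=
  (∀ (x y : A) (v : V), ρ (mul x y - mul y x) v = ρ x (ρ y v) - ρ y (ρ x v)) ∧
  (∀ (x y : A) (v : V), φ (mul x y) v = ρ x (φ y v) - φ y (ρ x v) + φ y (φ x v))

/-- `((V,ρ,φ),α)` is a representation of the averaging pre-Lie algebra `((A,∘),P)`. -/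
def IsAvgRep (mul : A →ₗ[k] A →ₗ[k] A) (P : A →ₗ[k] A)
    (ρ φ : A →ₗ[k] Module.End k V) (α : V →ₗ[k] V) : Prop :=
  IsRep mul ρ φ ∧
  (∀ (x : A) (v : V), ρ (P x) (α v) = α (ρ (P x) v) ∧ α (ρ (P x) v) = α (ρ x (α v))) ∧
  (∀ (x : A) (v : V), φ (P x) (α v) = α (φ (P x) v) ∧ α (φ (P x) v) = α (φ x (α v)))

/-- Transpose a family of endomorphisms of `V` to a family of endomorphisms of `V*`:
`(dualTr f) x = (f x)ᵗ`, i.e. `⟨(dualTr f)(x) ξ, v⟩ = ⟨ξ, f(x) v⟩`.  In particular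
`ρ* = dualTr (−ρ)`, `ρ* − φ* = dualTr (φ − ρ)` and `−φ* = dualTr φ`. -/
noncomputable def dualTr (f : A →ₗ[k] Module.End k V) :
    A →ₗ[k] Module.End k (Module.Dual k V) :=
  (Module.Dual.transpose (R := k)).comp f

/-- Let `((A,∘),P)` be an averaging pre-Lie algebra, `(V,ρ,φ)` a finite-dimensional
representation of `(A,∘)`, and `β : V → V` linear.  Then `((V*, ρ*−φ*, −φ*), β*)` is a
representation of `((A,∘),P)` iff `ρ(P(x))β(v) = β(ρ(P(x))v) = β(ρ(x)β(v))` and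
`φ(P(x))β(v) = β(φ(P(x))v) = β(φ(x)β(v))` for all `x ∈ A`, `v ∈ V`. -/
theorem dual_rep_iff [FiniteDimensional k V]
    (mul : A →ₗ[k] A →ₗ[k] A) (P : A →ₗ[k] A)
    (ρ φ : A →ₗ[k] Module.End k V) (β : V →ₗ[k] V)
    (hpre : ∀ x y z : A,
      mul (mul x y) z - mul x (mul y z) = mul (mul y x) z - mul y (mul x z))
    (havg1 : ∀ x y : A, mul (P x) (P y) = P (mul (P x) y))
    (havg2 : ∀ x y : A, mul (P x) (P y) = P (mul x (P y)))
    (hrep : IsRep mul ρ φ) :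
    IsAvgRep mul P (dualTr (φ - ρ)) (dualTr φ) β.dualMap
      ↔
    ((∀ (x : A) (v : V), ρ (P x) (β v) = β (ρ (P x) v) ∧ β (ρ (P x) v) = β (ρ x (β v))) ∧
     (∀ (x : A) (v : V), φ (P x) (β v) = β (φ (P x) v) ∧ β (φ (P x) v) = β (φ x (β v)))) := by
  obtain ⟨h1, h2⟩ := hrep
  have key : ∀ a b : V, (∀ f : Module.Dual k V, f a = f b) → a = b := by
    intro a b h
    exact Module.eval_apply_injective k (LinearMap.ext h)
  have e1 : ∀ (f : A →ₗ[k] Module.End k V) (x : A) (ξ : Module.Dual k V) (v : V),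
      dualTr f x ξ v = ξ (f x v) := fun _ _ _ _ => rfl
  constructor
  · rintro ⟨-, hr, hp⟩
    have hp' : ∀ (x : A) (v : V),
        φ (P x) (β v) = β (φ (P x) v) ∧ β (φ (P x) v) = β (φ x (β v)) := by
      intro x v
      have a1 : φ (P x) (β v) = β (φ (P x) v) := by
        refine key _ _ fun f => ?_
        have := LinearMap.congr_fun (hp x f).1 v
        simpa [e1] using this.symm
      refine ⟨a1, a1.symm.trans ?_⟩
      refine key _ _ fun f => ?_
      have := LinearMap.congr_fun (hp x f).2 v
      simpa [e1] using this
    refine ⟨fun x v => ?_, hp'⟩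
    have b1 : (φ - ρ) (P x) (β v) = β ((φ - ρ) (P x) v) := by
      refine key _ _ fun f => ?_
      have := LinearMap.congr_fun (hr x f).1 v
      simp only [e1, LinearMap.dualMap_apply] at this
      exact this.symm
    have b2 : (φ - ρ) (P x) (β v) = β ((φ - ρ) x (β v)) := by
      refine key _ _ fun f => ?_
      have := LinearMap.congr_fun (hr x f).2 v
      simp only [e1, LinearMap.dualMap_apply] at this
      exact this
    obtain ⟨p1, p2⟩ := hp' x v
    simp only [LinearMap.sub_apply, map_sub] at b1 b2
    have c1 : ρ (P x) (β v) = β (ρ (P x) v) := by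
      rw [p1] at b1
      exact sub_right_injective b1
    refine ⟨c1, c1.symm.trans ?_⟩
    rw [p1, p2] at b2
    exact sub_right_injective b2
  · rintro ⟨hr, hp⟩
    refine ⟨⟨fun x y f => ?_, fun x y f => ?_⟩, fun x f => ⟨?_, ?_⟩, fun x f => ⟨?_, ?_⟩⟩
    · ext v
      have h3 := h1 x y v
      simp only [map_sub, LinearMap.sub_apply] at h3
      simp only [e1, LinearMap.sub_apply, map_sub, h2]
      have h4 := congrArg f h3
      simp only [map_sub, map_add] at h4 ⊢
      linear_combination -h4
    · ext v
      simp only [e1, LinearMap.sub_apply, LinearMap.add_apply, map_sub, map_add, h2]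
      ring
    · ext v
      simp only [e1, LinearMap.dualMap_apply, LinearMap.sub_apply, (hr x v).1, (hp x v).1, map_sub]
    · ext v
      simp only [e1, LinearMap.dualMap_apply, LinearMap.sub_apply, (hr x v).1, (hp x v).1,
        (hr x v).2, (hp x v).2, map_sub]
    · ext v
      simp only [e1, LinearMap.dualMap_apply, (hp x v).1]
    · ext v
      simp only [e1, LinearMap.dualMap_apply, (hp x v).1, (hp x v).2]

end Stmt2
end

section
/- Let ((A,∘),P) be a finite-dimensional averaging pre-Lie algebra and S : A → A a linear map. Then ((A*, L*−R*, −R*), S*) is a representation of the averaging pre-Lie algebra ((A,∘),P) if and only if for all x,y ∈ A one has P(x)∘S(y) = S(P(x)∘y) = S(x∘S(y)) and S(x)∘P(y) = S(x∘P(y)) = S(S(x)∘y). -/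
namespace Stmt3

variable {k A V : Type*} [Field k] [CharZero k]
  [AddCommGroup A] [Module k A] [AddCommGroup V] [Module k V]

/-- `(V,ρ,φ)` is a representation of the pre-Lie algebra `(A,∘)`. -/
def IsRep (mul : A →ₗ[k] A →ₗ[k] A) (ρ φ : A →ₗ[k] Module.End k V) : Prop :=
  (∀ (x y : A) (v : V), ρ (mul x y - mul y x) v = ρ x (ρ y v) - ρ y (ρ x v)) ∧
  (∀ (x y : A) (v : V), φ (mul x y) v = ρ x (φ y v) - φ y (ρ x v) + φ y (φ x v))

/-- `((V,ρ,φ),α)` is a representation of the averaging pre-Lie algebra `((A,∘),P)`. -/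
def IsAvgRep (mul : A →ₗ[k] A →ₗ[k] A) (P : A →ₗ[k] A)
    (ρ φ : A →ₗ[k] Module.End k V) (α : V →ₗ[k] V) : Prop :=
  IsRep mul ρ φ ∧
  (∀ (x : A) (v : V), ρ (P x) (α v) = α (ρ (P x) v) ∧ α (ρ (P x) v) = α (ρ x (α v))) ∧
  (∀ (x : A) (v : V), φ (P x) (α v) = α (φ (P x) v) ∧ α (φ (P x) v) = α (φ x (α v)))

/-- Transpose a family of endomorphisms of `V` to a family of endomorphisms of `V*`.
With `L = mul` and `R = mul.flip`, one has `L* − R* = dualTr (R − L)` and `−R* = dualTr R`,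
where `⟨L*_x ξ, y⟩ = −⟨ξ, x∘y⟩` and `⟨R*_x ξ, y⟩ = −⟨ξ, y∘x⟩`. -/
noncomputable def dualTr (f : A →ₗ[k] Module.End k V) :
    A →ₗ[k] Module.End k (Module.Dual k V) :=
  (Module.Dual.transpose (R := k)).comp f

/-- Let `((A,∘),P)` be a finite-dimensional averaging pre-Lie algebra and `S : A → A`
linear.  Then `((A*, L*−R*, −R*), S*)` is a representation of `((A,∘),P)` iff
`P(x)∘S(y) = S(P(x)∘y) = S(x∘S(y))` and `S(x)∘P(y) = S(x∘P(y)) = S(S(x)∘y)`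
for all `x,y ∈ A`. -/
theorem coregular_S_iff [FiniteDimensional k A]
    (mul : A →ₗ[k] A →ₗ[k] A) (P : A →ₗ[k] A) (S : A →ₗ[k] A)
    (hpre : ∀ x y z : A,
      mul (mul x y) z - mul x (mul y z) = mul (mul y x) z - mul y (mul x z))
    (havg1 : ∀ x y : A, mul (P x) (P y) = P (mul (P x) y))
    (havg2 : ∀ x y : A, mul (P x) (P y) = P (mul x (P y))) :
    IsAvgRep mul P (dualTr (mul.flip - mul)) (dualTr mul.flip) S.dualMap
      ↔
    ((∀ x y : A, mul (P x) (S y) = S (mul (P x) y) ∧ S (mul (P x) y) = S (mul x (S y))) ∧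
     (∀ x y : A, mul (S x) (P y) = S (mul x (P y)) ∧ S (mul x (P y)) = S (mul (S x) y))) := by
  have sep : ∀ a b : A, (∀ ξ : Module.Dual k A, ξ a = ξ b) → a = b := by
    intro a b h
    rw [← sub_eq_zero]
    exact (Module.forall_dual_apply_eq_zero_iff k _).1 (fun ξ => by rw [map_sub, h ξ, sub_self])
  have hρ : ∀ (x y : A) (ξ : Module.Dual k A),
      dualTr (mul.flip - mul) x ξ y = ξ (mul y x - mul x y) := fun _ _ _ => rfl
  have hφ : ∀ (x y : A) (ξ : Module.Dual k A),
      dualTr mul.flip x ξ y = ξ (mul y x) := fun _ _ _ => rfl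
  have hS : ∀ (y : A) (ξ : Module.Dual k A), S.dualMap ξ y = ξ (S y) := fun _ _ => rfl
  constructor
  · rintro ⟨-, h1, h2⟩
    have r : ∀ x y : A, mul (S x) (P y) = S (mul x (P y)) ∧
        S (mul x (P y)) = S (mul (S x) y) := by
      intro x y
      have e1 : mul (S x) (P y) = S (mul x (P y)) := sep _ _ fun ξ => by
        have := LinearMap.congr_fun (h2 y ξ).1 x
        simp only [hφ, hS] at this
        exact this.symm
      have e2 : mul (S x) (P y) = S (mul (S x) y) := sep _ _ fun ξ => by
        have := LinearMap.congr_fun (h2 y ξ).2 x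
        simp only [hφ, hS] at this
        exact this
      exact ⟨e1, e1.symm.trans e2⟩
    refine ⟨fun x y => ?_, r⟩
    have e1 : S (mul y (P x) - mul (P x) y) = mul (S y) (P x) - mul (P x) (S y) :=
      sep _ _ fun ξ => by
        have := LinearMap.congr_fun (h1 x ξ).1 y
        simp only [hρ, hS] at this
        exact this
    have e2 : mul (S y) (P x) - mul (P x) (S y) = S (mul (S y) x - mul x (S y)) :=
      sep _ _ fun ξ => by
        have := LinearMap.congr_fun (h1 x ξ).2 y
        simp only [hρ, hS] at this
        exact this
    obtain ⟨r1, r2⟩ := r y x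
    rw [map_sub, r1] at e1
    rw [map_sub, ← r2, r1] at e2
    have e1' := sub_right_injective e1
    have e2' := sub_right_injective e2
    exact ⟨e1'.symm, e1'.trans e2'⟩
  · rintro ⟨h1, h2⟩
    refine ⟨⟨fun x y ξ => ?_, fun x y ξ => ?_⟩, fun x ξ => ⟨?_, ?_⟩, fun x ξ => ⟨?_, ?_⟩⟩
    · ext z
      simp only [hρ, LinearMap.sub_apply]
      rw [← map_sub]
      congr 1
      simp only [map_sub, LinearMap.sub_apply]
      have a := hpre x y z
      have b := hpre x z y
      have c := hpre y z x
      linear_combination (norm := module) -a + b - c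
    · ext z
      simp only [hρ, hφ, LinearMap.sub_apply, LinearMap.add_apply]
      rw [← map_sub, ← map_add]
      congr 1
      simp only [map_sub, LinearMap.sub_apply]
      have a := hpre x z y
      linear_combination (norm := module) a
    · ext y
      simp only [hρ, hS]
      rw [map_sub, (h1 x y).1, (h2 y x).1]
    · ext y
      simp only [hρ, hS]
      rw [map_sub S, (h1 x y).1, (h2 y x).1, (h1 x y).2, (h2 y x).2]
    · ext y
      simp only [hφ, hS]
      rw [(h2 y x).1]
    · ext y
      simp only [hφ, hS]
      rw [(h2 y x).1, (h2 y x).2]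

end Stmt3
end

section
/- Let ((A,∘),P) be a finite-dimensional averaging pre-Lie algebra. Then ((A*, L*−R*, −R*), P*) is a representation of ((A,∘),P) (the coregular representation). -/
namespace Stmt4

variable {k A V : Type*} [Field k] [CharZero k]
  [AddCommGroup A] [Module k A] [AddCommGroup V] [Module k V]

/-- `(V,ρ,φ)` is a representation of the pre-Lie algebra `(A,∘)`. -/
def IsRep (mul : A →ₗ[k] A →ₗ[k] A) (ρ φ : A →ₗ[k] Module.End k V) : Prop :=
  (∀ (x y : A) (v : V), ρ (mul x y - mul y x) v = ρ x (ρ y v) - ρ y (ρ x v)) ∧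
  (∀ (x y : A) (v : V), φ (mul x y) v = ρ x (φ y v) - φ y (ρ x v) + φ y (φ x v))

/-- `((V,ρ,φ),α)` is a representation of the averaging pre-Lie algebra `((A,∘),P)`. -/
def IsAvgRep (mul : A →ₗ[k] A →ₗ[k] A) (P : A →ₗ[k] A)
    (ρ φ : A →ₗ[k] Module.End k V) (α : V →ₗ[k] V) : Prop :=
  IsRep mul ρ φ ∧
  (∀ (x : A) (v : V), ρ (P x) (α v) = α (ρ (P x) v) ∧ α (ρ (P x) v) = α (ρ x (α v))) ∧
  (∀ (x : A) (v : V), φ (P x) (α v) = α (φ (P x) v) ∧ α (φ (P x) v) = α (φ x (α v)))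

/-- Transpose a family of endomorphisms of `V` to a family of endomorphisms of `V*`.
With `L = mul` and `R = mul.flip`, one has `L* − R* = dualTr (R − L)` and `−R* = dualTr R`,
where `⟨L*_x ξ, y⟩ = −⟨ξ, x∘y⟩` and `⟨R*_x ξ, y⟩ = −⟨ξ, y∘x⟩`. -/
noncomputable def dualTr (f : A →ₗ[k] Module.End k V) :
    A →ₗ[k] Module.End k (Module.Dual k V) :=
  (Module.Dual.transpose (R := k)).comp f

/-- Let `((A,∘),P)` be a finite-dimensional averaging pre-Lie algebra.  Then
`((A*, L*−R*, −R*), P*)` is a representation of `((A,∘),P)` (the coregular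
representation). -/
theorem coregular_rep [FiniteDimensional k A]
    (mul : A →ₗ[k] A →ₗ[k] A) (P : A →ₗ[k] A)
    (hpre : ∀ x y z : A,
      mul (mul x y) z - mul x (mul y z) = mul (mul y x) z - mul y (mul x z))
    (havg1 : ∀ x y : A, mul (P x) (P y) = P (mul (P x) y))
    (havg2 : ∀ x y : A, mul (P x) (P y) = P (mul x (P y))) :
    IsAvgRep mul P (dualTr (mul.flip - mul)) (dualTr mul.flip) P.dualMap := by
  refine ⟨⟨fun x y v => ?_, fun x y v => ?_⟩, fun x v => ⟨?_, ?_⟩, fun x v => ⟨?_, ?_⟩⟩ <;>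
    ext z <;>
    simp only [dualTr, LinearMap.comp_apply, Module.Dual.transpose_apply, LinearMap.sub_apply,
      LinearMap.add_apply, LinearMap.flip_apply, LinearMap.dualMap_apply, map_sub,
      ← havg1, ← havg2]
  · have h1 := congrArg v (hpre x y z)
    have h2 := congrArg v (hpre x z y)
    have h3 := congrArg v (hpre y z x)
    simp only [map_sub] at h1 h2 h3
    linear_combination -h1 + h2 - h3
  · have h2 := congrArg v (hpre x z y)
    simp only [map_sub] at h2
    linear_combination h2

end Stmt4
end

section
/- Let ((A,∘),P) be an averaging pre-Lie algebra and let ((V,ρ,φ),β) be a finite-dimensional representation of ((A,∘),P). Then the following are equivalent: (1) ((V*, ρ*, φ*), β*) is a representation of ((A,∘),P); (2) ((V, ρ−φ, −φ), β) is a representation of ((A,∘),P); (3) φ(x)φ(y) = −φ(y)φ(x) for all x,y ∈ A. -/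
namespace Stmt5

variable {k A V : Type*} [Field k] [CharZero k]
  [AddCommGroup A] [Module k A] [AddCommGroup V] [Module k V]

/-- `(V,ρ,φ)` is a representation of the pre-Lie algebra `(A,∘)`. -/
def IsRep (mul : A →ₗ[k] A →ₗ[k] A) (ρ φ : A →ₗ[k] Module.End k V) : Prop :=
  (∀ (x y : A) (v : V), ρ (mul x y - mul y x) v = ρ x (ρ y v) - ρ y (ρ x v)) ∧
  (∀ (x y : A) (v : V), φ (mul x y) v = ρ x (φ y v) - φ y (ρ x v) + φ y (φ x v))

/-- `((V,ρ,φ),α)` is a representation of the averaging pre-Lie algebra `((A,∘),P)`. -/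
def IsAvgRep (mul : A →ₗ[k] A →ₗ[k] A) (P : A →ₗ[k] A)
    (ρ φ : A →ₗ[k] Module.End k V) (α : V →ₗ[k] V) : Prop :=
  IsRep mul ρ φ ∧
  (∀ (x : A) (v : V), ρ (P x) (α v) = α (ρ (P x) v) ∧ α (ρ (P x) v) = α (ρ x (α v))) ∧
  (∀ (x : A) (v : V), φ (P x) (α v) = α (φ (P x) v) ∧ α (φ (P x) v) = α (φ x (α v)))

/-- Transpose a family of endomorphisms of `V` to a family of endomorphisms of `V*`.
In particular `ρ* = dualTr (−ρ)` where `⟨ρ*(x) ξ, v⟩ = −⟨ξ, ρ(x) v⟩`. -/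
noncomputable def dualTr (f : A →ₗ[k] Module.End k V) :
    A →ₗ[k] Module.End k (Module.Dual k V) :=
  (Module.Dual.transpose (R := k)).comp f

/-- Let `((A,∘),P)` be an averaging pre-Lie algebra and `((V,ρ,φ),β)` a finite-dimensional
representation of `((A,∘),P)`.  Then the following are equivalent:
(1) `((V*, ρ*, φ*), β*)` is a representation of `((A,∘),P)`;
(2) `((V, ρ−φ, −φ), β)` is a representation of `((A,∘),P)`;
(3) `φ(x)φ(y) = −φ(y)φ(x)` for all `x,y ∈ A`. -/
theorem dual_rep_tfae [FiniteDimensional k V]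
    (mul : A →ₗ[k] A →ₗ[k] A) (P : A →ₗ[k] A)
    (ρ φ : A →ₗ[k] Module.End k V) (β : V →ₗ[k] V)
    (hpre : ∀ x y z : A,
      mul (mul x y) z - mul x (mul y z) = mul (mul y x) z - mul y (mul x z))
    (havg1 : ∀ x y : A, mul (P x) (P y) = P (mul (P x) y))
    (havg2 : ∀ x y : A, mul (P x) (P y) = P (mul x (P y)))
    (hrep : IsAvgRep mul P ρ φ β) :
    (IsAvgRep mul P (dualTr (-ρ)) (dualTr (-φ)) β.dualMap
        ↔ IsAvgRep mul P (ρ - φ) (-φ) β) ∧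
    (IsAvgRep mul P (ρ - φ) (-φ) β
        ↔ ∀ (x y : A) (v : V), φ x (φ y v) = -(φ y (φ x v))) := by
  obtain ⟨⟨h1, h2⟩, h3, h4⟩ := hrep
  have e23 : IsAvgRep mul P (ρ - φ) (-φ) β
        ↔ ∀ (x y : A) (v : V), φ x (φ y v) = -(φ y (φ x v)) := by
    constructor
    · rintro ⟨⟨-, g2⟩, -, -⟩ x y v
      have a := g2 x y v
      have b := h2 x y v
      simp only [LinearMap.sub_apply, LinearMap.neg_apply, map_sub, map_neg] at a
      rw [b] at a
      linear_combination (norm := module) (-1 : k) • a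
    · intro h
      refine ⟨⟨fun x y v => ?_, fun x y v => ?_⟩, fun x v => ?_, fun x v => ?_⟩
      · have a := h1 x y v
        have b := h2 x y v
        have c := h2 y x v
        simp only [LinearMap.sub_apply, map_sub] at a ⊢
        rw [b, c]
        linear_combination (norm := module) (1 : k) • a
      · have b := h2 x y v
        have c := h x y v
        simp only [LinearMap.sub_apply, LinearMap.neg_apply, map_sub, map_neg]
        rw [b, c]
        abel
      · simp only [LinearMap.sub_apply, map_sub]
        rw [(h3 x v).1, (h4 x v).1, (h3 x v).2, (h4 x v).2]
        exact ⟨rfl, rfl⟩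
      · simp only [LinearMap.neg_apply, map_neg]
        rw [(h4 x v).1, (h4 x v).2]
        exact ⟨rfl, rfl⟩
  have ap : ∀ (g : A →ₗ[k] Module.End k V) (x : A) (f : Module.Dual k V) (v : V),
      dualTr (-g) x f v = -(f (g x v)) := by
    intro g x f v
    simp [dualTr, Module.Dual.transpose_apply]
  have e13 : IsAvgRep mul P (dualTr (-ρ)) (dualTr (-φ)) β.dualMap
        ↔ ∀ (x y : A) (v : V), φ x (φ y v) = -(φ y (φ x v)) := by
    constructor
    · rintro ⟨⟨-, g2⟩, -, -⟩ x y v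
      rw [← sub_eq_zero, ← Module.forall_dual_apply_eq_zero_iff k]
      intro f
      have a := LinearMap.congr_fun (g2 x y f) v
      have b := congrArg f (h2 x y v)
      simp only [LinearMap.sub_apply, LinearMap.add_apply, ap, map_sub, map_add, map_neg] at a b ⊢
      linear_combination -a - b
    · intro h
      refine ⟨⟨fun x y f => ?_, fun x y f => ?_⟩, fun x f => ?_, fun x f => ?_⟩
      · ext v
        have a := congrArg f (h1 x y v)
        simp only [LinearMap.sub_apply, ap, map_sub] at a ⊢
        linear_combination -a
      · ext v
        have b := congrArg f (h2 x y v)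
        have c := congrArg f (h x y v)
        simp only [LinearMap.sub_apply, LinearMap.add_apply, ap, map_sub, map_add, map_neg] at b c ⊢
        linear_combination -b - c
      · constructor <;> ext v <;> simp only [LinearMap.dualMap_apply, ap]
        · rw [(h3 x v).1]
        · rw [(h3 x v).1, (h3 x v).2]
      · constructor <;> ext v <;> simp only [LinearMap.dualMap_apply, ap]
        · rw [(h4 x v).1]
        · rw [(h4 x v).1, (h4 x v).2]
  exact ⟨e13.trans e23.symm, e23⟩

end Stmt5
end

section
/- Let ((V,ρ,φ),α) be a representation of an averaging pre-Lie algebra ((A,∘),P). Define ρ^L, ρ^R : A → End(V) by ρ^L(x) := ρ(P(x)) − φ(P(x)) and ρ^R(x)(ξ) := −ρ(x)(α(ξ)) + φ(x)(α(ξ)). Then (V; ρ^L, ρ^R) is a representation of the induced Leibniz algebra (A, [·,·]_P) with [x,y]_P = P(x)∘y − y∘P(x); that is, for all x,y ∈ A: ρ^L([x,y]_P) = ρ^L(x)ρ^L(y) − ρ^L(y)ρ^L(x), ρ^R([x,y]_P) = ρ^L(x)ρ^R(y) − ρ^R(y)ρ^L(x), and ρ^R(y)∘ρ^L(x) = −ρ^R(y)∘ρ^R(x)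 (composition of endomorphisms). -/
namespace Stmt6

variable {k A V : Type*} [Field k] [CharZero k]
  [AddCommGroup A] [Module k A] [AddCommGroup V] [Module k V]

/-- The bracket `[x,y]_P := P(x)∘y − y∘P(x)` of the induced Leibniz algebra. -/
def bracketP (mul : A →ₗ[k] A →ₗ[k] A) (P : A →ₗ[k] A) (x y : A) : A :=
  mul (P x) y - mul y (P x)

/-- `ρ^L(x) := ρ(P(x)) − φ(P(x))`. -/
def rhoL (ρ φ : A →ₗ[k] Module.End k V) (P : A →ₗ[k] A) (x : A) (ξ : V) : V :=
  ρ (P x) ξ - φ (P x) ξ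

/-- `ρ^R(x)(ξ) := −ρ(x)(α(ξ)) + φ(x)(α(ξ))`. -/
def rhoR (ρ φ : A →ₗ[k] Module.End k V) (α : V →ₗ[k] V) (x : A) (ξ : V) : V :=
  -(ρ x (α ξ)) + φ x (α ξ)

/-- Let `((V,ρ,φ),α)` be a representation of an averaging pre-Lie algebra `((A,∘),P)`.
Then `(V; ρ^L, ρ^R)` is a representation of the induced Leibniz algebra `(A,[·,·]_P)`. -/
theorem induced_Leibniz_rep
    (mul : A →ₗ[k] A →ₗ[k] A) (P : A →ₗ[k] A)
    (ρ φ : A →ₗ[k] Module.End k V) (α : V →ₗ[k] V)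
    (hpre : ∀ x y z : A,
      mul (mul x y) z - mul x (mul y z) = mul (mul y x) z - mul y (mul x z))
    (havg1 : ∀ x y : A, mul (P x) (P y) = P (mul (P x) y))
    (havg2 : ∀ x y : A, mul (P x) (P y) = P (mul x (P y)))
    (hrep1 : ∀ (x y : A) (v : V), ρ (mul x y - mul y x) v = ρ x (ρ y v) - ρ y (ρ x v))
    (hrep2 : ∀ (x y : A) (v : V),
      φ (mul x y) v = ρ x (φ y v) - φ y (ρ x v) + φ y (φ x v))
    (halpha1 : ∀ (x : A) (v : V),
      ρ (P x) (α v) = α (ρ (P x) v) ∧ α (ρ (P x) v) = α (ρ x (α v)))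
    (halpha2 : ∀ (x : A) (v : V),
      φ (P x) (α v) = α (φ (P x) v) ∧ α (φ (P x) v) = α (φ x (α v))) :
    (∀ (x y : A) (ξ : V),
      rhoL ρ φ P (bracketP mul P x y) ξ
        = rhoL ρ φ P x (rhoL ρ φ P y ξ) - rhoL ρ φ P y (rhoL ρ φ P x ξ)) ∧
    (∀ (x y : A) (ξ : V),
      rhoR ρ φ α (bracketP mul P x y) ξ
        = rhoL ρ φ P x (rhoR ρ φ α y ξ) - rhoR ρ φ α y (rhoL ρ φ P x ξ)) ∧
    (∀ (x y : A) (ξ : V),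
      rhoR ρ φ α y (rhoL ρ φ P x ξ) = -(rhoR ρ φ α y (rhoR ρ φ α x ξ))) := by
  have key : ∀ (x y : A) (v : V),
      ρ (mul x y - mul y x) v - φ (mul x y - mul y x) v
        = (ρ x (ρ y v - φ y v) - φ x (ρ y v - φ y v))
          - (ρ y (ρ x v - φ x v) - φ y (ρ x v - φ x v)) := by
    intro x y v
    rw [hrep1, map_sub φ, LinearMap.sub_apply, hrep2, hrep2]
    simp only [map_sub]
    abel
  refine ⟨?_, ?_, ?_⟩
  · intro x y ξ
    have h : P (bracketP mul P x y) = mul (P x) (P y) - mul (P y) (P x) := by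
      rw [bracketP, map_sub, ← havg1, ← havg2]
    simp only [rhoL, h]
    exact key (P x) (P y) ξ
  · intro x y ξ
    have h := key (P x) y (α ξ)
    rw [(halpha1 x ξ).1, (halpha2 x ξ).1, ← map_sub α] at h
    simp only [rhoL, rhoR, bracketP]
    have e : ∀ a b : V, -a + b = -(a - b) := fun a b => by abel
    simp only [e, h, map_neg]
    abel
  · intro x y ξ
    have h : α (rhoL ρ φ P x ξ) = -α (rhoR ρ φ α x ξ) := by
      simp only [rhoL, rhoR, map_sub, map_add, map_neg,
        (halpha1 x ξ).2, (halpha2 x ξ).2]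
      abel
    simp only [rhoR] at h ⊢
    rw [h]
    simp only [map_neg]
    abel

end Stmt6
end

section
/- Let ((A,∘_A),P_A) and ((b,∘_b),P_b) be averaging pre-Lie algebras, ((b,ρ_A,φ_A),P_b) a representation of ((A,∘_A),P_A), and ((A,ρ_b,φ_b),P_A) a representation of ((b,∘_b),P_b). Define on A ⊕ b the product (x+a)∘⋆(y+c) := x∘_A y + ρ_b(a)y + φ_b(c)x + a∘_b c + ρ_A(x)c + φ_A(y)a and the linear map P⋆(x+a) := P_A(x) + P_b(a). Then (A ⊕ b, ∘⋆, P⋆) is an averaging pre-Lie algebra if and only if for all x,y ∈ A and a,c ∈ b the following four identities hold: (i) ρ_A(x)(a∘_b c) = −ρ_A(ρ_b(a)x − φ_b(a)x)c + (ρ_A(x)a − φ_A(x)a)∘_b c + φ_A(φ_b(c)x)a + a∘_b(ρ_A(x)c); (ii) φ_A(x)(a∘_b c − c∘_b a) = φ_A(ρ_b(c)x)a − φ_A(ρ_b(a)x)c + a∘_b(φ_A(x)c) − c∘_b(φ_A(x)a); (iii) ρ_b(a)(x∘_A y) = −ρ_b(ρ_A(x)a − φ_A(x)a)y + (ρ_b(a)x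 − φ_b(a)x)∘_A y + φ_b(φ_A(y)a)x + x∘_A(ρ_b(a)y); (iv) φ_b(a)(x∘_A y − y∘_A x) = φ_b(ρ_A(y)a)x − φ_b(ρ_A(x)a)y + x∘_A(φ_b(a)y) − y∘_A(φ_b(a)x). -/
namespace Stmt7

variable {k A B : Type*} [Field k] [CharZero k]
  [AddCommGroup A] [Module k A] [AddCommGroup B] [Module k B]

/-- The product `∘⋆` on `A ⊕ b`:
`(x+a) ∘⋆ (y+c) = x∘_A y + ρ_b(a)y + φ_b(c)x + a∘_b c + ρ_A(x)c + φ_A(y)a`. -/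
def circStar (mulA : A →ₗ[k] A →ₗ[k] A) (mulB : B →ₗ[k] B →ₗ[k] B)
    (ρA φA : A →ₗ[k] Module.End k B) (ρB φB : B →ₗ[k] Module.End k A)
    (p q : A × B) : A × B :=
  (mulA p.1 q.1 + ρB p.2 q.1 + φB q.2 p.1,
   mulB p.2 q.2 + ρA p.1 q.2 + φA q.1 p.2)

/-- The map `P⋆(x+a) := P_A(x) + P_b(a)` on `A ⊕ b`. -/
def Pstar (PA : A →ₗ[k] A) (PB : B →ₗ[k] B) (p : A × B) : A × B := (PA p.1, PB p.2)

/-- Let `((A,∘_A),P_A)` and `((b,∘_b),P_b)` be averaging pre-Lie algebras,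
`((b,ρ_A,φ_A),P_b)` a representation of `((A,∘_A),P_A)` and `((A,ρ_b,φ_b),P_A)` a
representation of `((b,∘_b),P_b)`.  Then `(A ⊕ b, ∘⋆, P⋆)` is an averaging pre-Lie
algebra iff the four matched-pair identities hold. -/
theorem double_iff_matched_pair
    (mulA : A →ₗ[k] A →ₗ[k] A) (mulB : B →ₗ[k] B →ₗ[k] B)
    (PA : A →ₗ[k] A) (PB : B →ₗ[k] B)
    (ρA φA : A →ₗ[k] Module.End k B) (ρB φB : B →ₗ[k] Module.End k A)
    -- `((A,∘_A),P_A)` is an averaging pre-Lie algebra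
    (hpreA : ∀ x y z : A,
      mulA (mulA x y) z - mulA x (mulA y z) = mulA (mulA y x) z - mulA y (mulA x z))
    (havgA1 : ∀ x y : A, mulA (PA x) (PA y) = PA (mulA (PA x) y))
    (havgA2 : ∀ x y : A, mulA (PA x) (PA y) = PA (mulA x (PA y)))
    -- `((b,∘_b),P_b)` is an averaging pre-Lie algebra
    (hpreB : ∀ a b c : B,
      mulB (mulB a b) c - mulB a (mulB b c) = mulB (mulB b a) c - mulB b (mulB a c))
    (havgB1 : ∀ a b : B, mulB (PB a) (PB b) = PB (mulB (PB a) b))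
    (havgB2 : ∀ a b : B, mulB (PB a) (PB b) = PB (mulB a (PB b)))
    -- `((b,ρ_A,φ_A),P_b)` is a representation of `((A,∘_A),P_A)`
    (hrepA1 : ∀ (x y : A) (a : B),
      ρA (mulA x y - mulA y x) a = ρA x (ρA y a) - ρA y (ρA x a))
    (hrepA2 : ∀ (x y : A) (a : B),
      φA (mulA x y) a = ρA x (φA y a) - φA y (ρA x a) + φA y (φA x a))
    (hrepA3 : ∀ (x : A) (a : B),
      ρA (PA x) (PB a) = PB (ρA (PA x) a) ∧ PB (ρA (PA x) a) = PB (ρA x (PB a)))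
    (hrepA4 : ∀ (x : A) (a : B),
      φA (PA x) (PB a) = PB (φA (PA x) a) ∧ PB (φA (PA x) a) = PB (φA x (PB a)))
    -- `((A,ρ_b,φ_b),P_A)` is a representation of `((b,∘_b),P_b)`
    (hrepB1 : ∀ (a b : B) (x : A),
      ρB (mulB a b - mulB b a) x = ρB a (ρB b x) - ρB b (ρB a x))
    (hrepB2 : ∀ (a b : B) (x : A),
      φB (mulB a b) x = ρB a (φB b x) - φB b (ρB a x) + φB b (φB a x))
    (hrepB3 : ∀ (a : B) (x : A),
      ρB (PB a) (PA x) = PA (ρB (PB a) x) ∧ PA (ρB (PB a) x) = PA (ρB a (PA x)))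
    (hrepB4 : ∀ (a : B) (x : A),
      φB (PB a) (PA x) = PA (φB (PB a) x) ∧ PA (φB (PB a) x) = PA (φB a (PA x))) :
    -- `(A ⊕ b, ∘⋆, P⋆)` is an averaging pre-Lie algebra
    ((∀ p q r : A × B,
        circStar mulA mulB ρA φA ρB φB (circStar mulA mulB ρA φA ρB φB p q) r
          - circStar mulA mulB ρA φA ρB φB p (circStar mulA mulB ρA φA ρB φB q r)
        = circStar mulA mulB ρA φA ρB φB (circStar mulA mulB ρA φA ρB φB q p) r
          - circStar mulA mulB ρA φA ρB φB q (circStar mulA mulB ρA φA ρB φB p r)) ∧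
     (∀ p q : A × B,
        circStar mulA mulB ρA φA ρB φB (Pstar PA PB p) (Pstar PA PB q)
          = Pstar PA PB (circStar mulA mulB ρA φA ρB φB (Pstar PA PB p) q) ∧
        circStar mulA mulB ρA φA ρB φB (Pstar PA PB p) (Pstar PA PB q)
          = Pstar PA PB (circStar mulA mulB ρA φA ρB φB p (Pstar PA PB q))))
      ↔
    -- the four matched-pair identities
    ((∀ (x : A) (a c : B),
        ρA x (mulB a c)
          = -(ρA (ρB a x - φB a x) c) + mulB (ρA x a - φA x a) c
            + φA (φB c x) a + mulB a (ρA x c)) ∧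
     (∀ (x : A) (a c : B),
        φA x (mulB a c - mulB c a)
          = φA (ρB c x) a - φA (ρB a x) c + mulB a (φA x c) - mulB c (φA x a)) ∧
     (∀ (a : B) (x y : A),
        ρB a (mulA x y)
          = -(ρB (ρA x a - φA x a) y) + mulA (ρB a x - φB a x) y
            + φB (φA y a) x + mulA x (ρB a y)) ∧
     (∀ (a : B) (x y : A),
        φB a (mulA x y - mulA y x)
          = φB (ρA y a) x - φB (ρA x a) y + mulA x (φB a y) - mulA y (φB a x))) := by
  constructor
  · rintro ⟨h, -⟩
    refine ⟨fun x a c => ?_, fun x a c => ?_, fun a x y => ?_, fun a x y => ?_⟩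
    · have := congrArg Prod.snd (h (x, 0) (0, a) (0, c))
      simp [circStar] at this
      simp only [map_sub, LinearMap.sub_apply]
      linear_combination (norm := module) -this
    · have := congrArg Prod.snd (h (0, a) (0, c) (x, 0))
      simp [circStar] at this
      simp only [map_sub]
      linear_combination (norm := module) this
    · have := congrArg Prod.fst (h (0, a) (x, 0) (y, 0))
      simp [circStar] at this
      simp only [map_sub, LinearMap.sub_apply]
      linear_combination (norm := module) -this
    · have := congrArg Prod.fst (h (x, 0) (y, 0) (0, a))
      simp [circStar] at this
      simp only [map_sub]
      linear_combination (norm := module) this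
  · rintro ⟨h1, h2, h3, h4⟩
    simp only [map_sub, LinearMap.sub_apply] at h1 h2 h3 h4 hrepA1 hrepB1
    refine ⟨?_, ?_⟩
    · rintro ⟨x, a⟩ ⟨y, b⟩ ⟨z, c⟩
      refine Prod.ext ?_ ?_
      · simp only [circStar, Prod.fst_sub, map_add, LinearMap.add_apply]
        linear_combination (norm := module) hpreA x y z + hrepB1 a b z + h4 c x y + h3 b x z - h3 a y z
          - hrepB2 b c x + hrepB2 a c y
      · simp only [circStar, Prod.snd_sub, map_add, LinearMap.add_apply]
        linear_combination (norm := module) hpreB a b c + hrepA1 x y c + h2 z a b + h1 y a c - h1 x b c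
          - hrepA2 y z a + hrepA2 x z b
    · rintro ⟨x, a⟩ ⟨y, b⟩
      refine ⟨Prod.ext ?_ ?_, Prod.ext ?_ ?_⟩ <;> simp only [circStar, Pstar, map_add]
      · rw [havgA1, (hrepB3 a y).1, (hrepB4 b x).1, (hrepB4 b x).2]
      · rw [havgB1, (hrepA3 x b).1, (hrepA4 y a).1, (hrepA4 y a).2]
      · rw [havgA2, (hrepB3 a y).1, (hrepB3 a y).2, (hrepB4 b x).1]
      · rw [havgB2, (hrepA3 x b).1, (hrepA3 x b).2, (hrepA4 y a).1]

end Stmt7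
end

section
/- Let ((A,∘),P) be a finite-dimensional averaging pre-Lie algebra and ω a nondegenerate skew-symmetric bilinear form on A satisfying the invariance ω(x∘y, z) + ω(y, x∘z − z∘x) = 0 and the compatibility ω(P(x),y) = ω(x,P(y)) for all x,y,z ∈ A. Then the linear map ω♯ : A → A*, defined by ⟨ω♯(x), y⟩ = ω(x,y), is a linear isomorphism satisfying, for all x,y ∈ A: (L*−R*)(x)(ω♯(y)) = ω♯(x∘y), −R*(x)(ω♯(y)) = ω♯(y∘x), and P*(ω♯(x)) = ω♯(P(x)); i.e., ω♯ is an isomorphism from the regular representation ((A,L,R),P) to the coregular representation ((A*,L*−R*,−R*),P*). -/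
namespace Stmt8

variable {k A : Type*} [Field k] [CharZero k] [AddCommGroup A] [Module k A]

/-- Transpose a family of endomorphisms of `A` to a family of endomorphisms of `A*`.
With `L = mul` and `R = mul.flip`, `L* − R* = dualTr (R − L)` and `−R* = dualTr R`. -/
noncomputable def dualTr (f : A →ₗ[k] Module.End k A) :
    A →ₗ[k] Module.End k (Module.Dual k A) :=
  (Module.Dual.transpose (R := k)).comp f

/-- Let `((A,∘),P)` be a finite-dimensional averaging pre-Lie algebra and `ω` a
nondegenerate skew-symmetric invariant bilinear form compatible with `P`.  Then
`ω♯ : A → A*`, `⟨ω♯(x),y⟩ = ω(x,y)`, is a linear isomorphism intertwining the regular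
representation `((A,L,R),P)` with the coregular representation `((A*,L*−R*,−R*),P*)`. -/
theorem omega_sharp_iso [FiniteDimensional k A]
    (mul : A →ₗ[k] A →ₗ[k] A) (P : A →ₗ[k] A) (ω : A →ₗ[k] Module.Dual k A)
    (hpre : ∀ x y z : A,
      mul (mul x y) z - mul x (mul y z) = mul (mul y x) z - mul y (mul x z))
    (havg1 : ∀ x y : A, mul (P x) (P y) = P (mul (P x) y))
    (havg2 : ∀ x y : A, mul (P x) (P y) = P (mul x (P y)))
    (hskew : ∀ x y : A, ω x y = -(ω y x))
    (hnondeg : ∀ x : A, (∀ y : A, ω x y = 0) → x = 0)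
    (hinv : ∀ x y z : A, ω (mul x y) z + ω y (mul x z - mul z x) = 0)
    (hcomp : ∀ x y : A, ω (P x) y = ω x (P y)) :
    Function.Bijective ω ∧
    (∀ x y : A, dualTr (mul.flip - mul) x (ω y) = ω (mul x y)) ∧
    (∀ x y : A, dualTr mul.flip x (ω y) = ω (mul y x)) ∧
    (∀ x : A, P.dualMap (ω x) = ω (P x)) := by
  have hinj : Function.Injective ω := by
    rw [injective_iff_map_eq_zero]
    intro x hx
    exact hnondeg x (fun y => by rw [hx]; rfl)
  refine ⟨⟨hinj, ?_⟩, ?_, ?_, ?_⟩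
  · exact (LinearMap.injective_iff_surjective_of_finrank_eq_finrank
      (Subspace.dual_finrank_eq (K := k) (V := A)).symm).1 hinj
  · intro x y
    ext z
    change ω y (mul z x - mul x z) = ω (mul x y) z
    have h := hinv x y z
    rw [map_sub] at h ⊢
    linear_combination -h
  · intro x y
    ext z
    change ω y (mul z x) = ω (mul y x) z
    have h1 := hinv x y z
    have h2 := hinv x z y
    rw [map_sub] at h1 h2
    linear_combination hskew (mul x y) z + hskew (mul x z) y - hskew (mul y x) z - h1 - h2
  · intro x
    ext z
    exact (hcomp x z).symm

end Stmt8
end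

section
/- Let A be a finite-dimensional vector space, Δ : A → A ⊗ A a linear map making (A,Δ) a pre-Lie coalgebra, and S : A → A a linear map satisfying (S⊗S)Δ(x) = (S⊗id)Δ(S(x)) = (id⊗S)Δ(S(x)) for all x ∈ A (an averaging pre-Lie coalgebra). Define the product ∘_{A*} on A* by ⟨ξ ∘_{A*} η, x⟩ = ⟨ξ⊗η, Δ(x)⟩ and let S* : A* → A* be the transpose of S. Then ((A*, ∘_{A*}), S*) is an averaging pre-Lie algebra. -/
open TensorProduct

namespace Stmt9

variable {k A : Type*} [Field k] [CharZero k] [AddCommGroup A] [Module k A]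

/-- The flip `τ : A⊗A → A⊗A`, `τ(x⊗y) = y⊗x`. -/
noncomputable def τ (k A : Type*) [Field k] [AddCommGroup A] [Module k A] :
    A ⊗[k] A →ₗ[k] A ⊗[k] A :=
  (TensorProduct.comm k A A).toLinearMap

/-- `τ ⊗ id` on `(A⊗A)⊗A`. -/
noncomputable def τ12 (k A : Type*) [Field k] [AddCommGroup A] [Module k A] :
    (A ⊗[k] A) ⊗[k] A →ₗ[k] (A ⊗[k] A) ⊗[k] A :=
  TensorProduct.map (τ k A) LinearMap.id

/-- `(Δ ⊗ id) ∘ Δ : A → (A⊗A)⊗A`. -/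
noncomputable def coL (Δ : A →ₗ[k] A ⊗[k] A) : A →ₗ[k] (A ⊗[k] A) ⊗[k] A :=
  (TensorProduct.map Δ LinearMap.id).comp Δ

/-- `(id ⊗ Δ) ∘ Δ : A → (A⊗A)⊗A` (re-associated). -/
noncomputable def coR (Δ : A →ₗ[k] A ⊗[k] A) : A →ₗ[k] (A ⊗[k] A) ⊗[k] A :=
  ((TensorProduct.assoc k A A A).symm.toLinearMap.comp
    (TensorProduct.map LinearMap.id Δ)).comp Δ

/-- The product on `A*` dual to `Δ`: `⟨ξ ∘_{A*} η, x⟩ = ⟨ξ⊗η, Δ(x)⟩`. -/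
noncomputable def mulD (Δ : A →ₗ[k] A ⊗[k] A) (ξ η : Module.Dual k A) :
    Module.Dual k A :=
  (((TensorProduct.lid k k).toLinearMap.comp (TensorProduct.map ξ η)).comp Δ)

/-- The trilinear pairing with `ξ ⊗ η ⊗ ζ`. -/
noncomputable def tri (ξ η ζ : Module.Dual k A) : (A ⊗[k] A) ⊗[k] A →ₗ[k] k :=
  (TensorProduct.lid k k).toLinearMap.comp
    (TensorProduct.map ((TensorProduct.lid k k).toLinearMap.comp (TensorProduct.map ξ η)) ζ)

theorem tri_coL (Δ : A →ₗ[k] A ⊗[k] A) (ξ η ζ : Module.Dual k A) (x : A) :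
    tri ξ η ζ (coL Δ x) = mulD Δ (mulD Δ ξ η) ζ x := by
  simp only [coL, LinearMap.comp_apply, mulD, tri]
  induction Δ x using TensorProduct.induction_on with
  | zero => simp
  | add a b ha hb => simp only [map_add, ha, hb]
  | tmul a b => simp

theorem tri_coR (Δ : A →ₗ[k] A ⊗[k] A) (ξ η ζ : Module.Dual k A) (x : A) :
    tri ξ η ζ (coR Δ x) = mulD Δ ξ (mulD Δ η ζ) x := by
  simp only [coR, LinearMap.comp_apply, mulD, tri]
  induction Δ x using TensorProduct.induction_on with
  | zero => simp
  | add a b ha hb => simp only [map_add, ha, hb]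
  | tmul a b =>
    simp only [TensorProduct.map_tmul, LinearMap.comp_apply, LinearMap.id_apply]
    induction Δ b using TensorProduct.induction_on with
    | zero => simp
    | add c d hc hd => simp only [map_add, TensorProduct.tmul_add, hc, hd]
    | tmul c d => simp [mul_assoc]

theorem tri_tau (ξ η ζ : Module.Dual k A) (t : (A ⊗[k] A) ⊗[k] A) :
    tri ξ η ζ (τ12 k A t) = tri η ξ ζ t := by
  have : (tri ξ η ζ).comp (τ12 k A) = tri η ξ ζ := by
    apply TensorProduct.ext_threefold
    intro a b c
    simp [tri, τ12, τ, mul_comm]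
  exact LinearMap.congr_fun this t

theorem mulD_map (ξ η : Module.Dual k A) (f g : A →ₗ[k] A) (t : A ⊗[k] A) :
    TensorProduct.map (ξ.comp f) (η.comp g) t
      = TensorProduct.map ξ η (TensorProduct.map f g t) := by
  rw [TensorProduct.map_comp]; rfl

/-- Let `(A,Δ)` be a finite-dimensional pre-Lie coalgebra and `S : A → A` linear with
`(S⊗S)Δ(x) = (S⊗id)Δ(S(x)) = (id⊗S)Δ(S(x))`.  Then `((A*, ∘_{A*}), S*)` is an
averaging pre-Lie algebra. -/
theorem dual_of_averaging_coalgebra [FiniteDimensional k A]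
    (Δ : A →ₗ[k] A ⊗[k] A) (S : A →ₗ[k] A)
    (hco : ∀ x : A,
      coL Δ x - coR Δ x = τ12 k A (coL Δ x) - τ12 k A (coR Δ x))
    (hS : ∀ x : A,
      TensorProduct.map S S (Δ x) = TensorProduct.map S LinearMap.id (Δ (S x)) ∧
      TensorProduct.map S LinearMap.id (Δ (S x))
        = TensorProduct.map LinearMap.id S (Δ (S x))) :
    (∀ ξ η ζ : Module.Dual k A,
      mulD Δ (mulD Δ ξ η) ζ - mulD Δ ξ (mulD Δ η ζ)
        = mulD Δ (mulD Δ η ξ) ζ - mulD Δ η (mulD Δ ξ ζ)) ∧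
    (∀ ξ η : Module.Dual k A,
      mulD Δ (S.dualMap ξ) (S.dualMap η) = S.dualMap (mulD Δ (S.dualMap ξ) η) ∧
      mulD Δ (S.dualMap ξ) (S.dualMap η) = S.dualMap (mulD Δ ξ (S.dualMap η))) := by
  refine ⟨fun ξ η ζ => ?_, fun ξ η => ?_⟩
  · ext x
    have h := congrArg (tri ξ η ζ) (hco x)
    simp only [map_sub, tri_tau, tri_coL, tri_coR] at h
    simpa only [LinearMap.sub_apply] using h
  · have key : ∀ f g : A →ₗ[k] A, ∀ y : A, mulD Δ (f.dualMap ξ) (g.dualMap η) y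
        = TensorProduct.lid k k (TensorProduct.map ξ η (TensorProduct.map f g (Δ y))) := by
      intro f g y
      rw [← mulD_map]; rfl
    constructor
    · ext x
      have h2 := key S LinearMap.id (S x)
      rw [← (hS x).1, ← key S S x] at h2
      exact h2.symm
    · ext x
      have h2 := key LinearMap.id S (S x)
      rw [← (hS x).2, ← (hS x).1, ← key S S x] at h2
      exact h2.symm

end Stmt9
end

section
/- Let (A,∘) be a pre-Lie algebra, B : A → A a Rota-Baxter operator of weight λ, and P : A → A an averaging operator on (A,∘) with P∘B = B∘P. Then P is an averaging operator on the descendent pre-Lie algebra (A,∘_B), where x ∘_B y := B(x)∘y + x∘B(y) + λ x∘y; that is, P(x) ∘_B P(y) = P(P(x) ∘_B y) = P(x ∘_B P(y)) for all x,y ∈ A. -/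
namespace Stmt10

variable {k A : Type*} [Field k] [CharZero k] [AddCommGroup A] [Module k A]

/-- The descendent product `x ∘_B y := B(x)∘y + x∘B(y) + λ x∘y`. -/
def mulB (mul : A →ₗ[k] A →ₗ[k] A) (B : A →ₗ[k] A) (lam : k) (x y : A) : A :=
  mul (B x) y + mul x (B y) + lam • mul x y

/-- Let `(A,∘)` be a pre-Lie algebra, `B` a Rota-Baxter operator of weight `λ` and `P`
an averaging operator on `(A,∘)` commuting with `B`.  Then `P` is an averaging operator
on the descendent pre-Lie algebra `(A,∘_B)`. -/
theorem averaging_on_descendent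
    (mul : A →ₗ[k] A →ₗ[k] A) (B P : A →ₗ[k] A) (lam : k)
    (hpre : ∀ x y z : A,
      mul (mul x y) z - mul x (mul y z) = mul (mul y x) z - mul y (mul x z))
    (hRB : ∀ x y : A,
      mul (B x) (B y) = B (mul (B x) y + mul x (B y) + lam • mul x y))
    (havg1 : ∀ x y : A, mul (P x) (P y) = P (mul (P x) y))
    (havg2 : ∀ x y : A, mul (P x) (P y) = P (mul x (P y)))
    (hcomm : ∀ x : A, P (B x) = B (P x)) :
    ∀ x y : A,
      mulB mul B lam (P x) (P y) = P (mulB mul B lam (P x) y) ∧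
      mulB mul B lam (P x) (P y) = P (mulB mul B lam x (P y)) := by
  intro x y
  unfold mulB
  constructor
  · rw [map_add, map_add, map_smul, ← hcomm, ← hcomm, havg1, havg1, havg1]
  · rw [map_add, map_add, map_smul, ← hcomm, ← hcomm, havg2, havg2, havg2]

end Stmt10
end

section
/- Let T : V → A be a relative Rota-Baxter operator on an averaging pre-Lie algebra ((A,∘),P) with respect to a representation ((V,ρ,φ),α), i.e. T(u)∘T(v) = T(ρ(T(u))v + φ(T(v))u) for all u,v ∈ V and P∘T = T∘α. Define u ∘_T v := ρ(T(u))v + φ(T(v))u. Then ((V,∘_T),α) is an averaging pre-Lie algebra: ∘_T satisfies the pre-Lie identity and α(u) ∘_T α(v) = α(α(u) ∘_T v) = α(u ∘_T α(v)) for all u,v ∈ V. -/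
namespace Stmt12

variable {k A V : Type*} [Field k] [CharZero k]
  [AddCommGroup A] [Module k A] [AddCommGroup V] [Module k V]

/-- The descendent product `u ∘_T v := ρ(T(u))v + φ(T(v))u` on `V`. -/
def circT (ρ φ : A →ₗ[k] Module.End k V) (T : V →ₗ[k] A) (u v : V) : V :=
  ρ (T u) v + φ (T v) u

/-- Let `T : V → A` be a relative Rota-Baxter operator on an averaging pre-Lie algebra
`((A,∘),P)` with respect to a representation `((V,ρ,φ),α)`.  Then `((V,∘_T),α)` is an
averaging pre-Lie algebra. -/
theorem descendent_averaging_preLie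
    (mul : A →ₗ[k] A →ₗ[k] A) (P : A →ₗ[k] A)
    (ρ φ : A →ₗ[k] Module.End k V) (α : V →ₗ[k] V) (T : V →ₗ[k] A)
    (hpre : ∀ x y z : A,
      mul (mul x y) z - mul x (mul y z) = mul (mul y x) z - mul y (mul x z))
    (havg1 : ∀ x y : A, mul (P x) (P y) = P (mul (P x) y))
    (havg2 : ∀ x y : A, mul (P x) (P y) = P (mul x (P y)))
    (hrep1 : ∀ (x y : A) (v : V), ρ (mul x y - mul y x) v = ρ x (ρ y v) - ρ y (ρ x v))
    (hrep2 : ∀ (x y : A) (v : V),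
      φ (mul x y) v = ρ x (φ y v) - φ y (ρ x v) + φ y (φ x v))
    (halpha1 : ∀ (x : A) (v : V),
      ρ (P x) (α v) = α (ρ (P x) v) ∧ α (ρ (P x) v) = α (ρ x (α v)))
    (halpha2 : ∀ (x : A) (v : V),
      φ (P x) (α v) = α (φ (P x) v) ∧ α (φ (P x) v) = α (φ x (α v)))
    (hT : ∀ u v : V, mul (T u) (T v) = T (ρ (T u) v + φ (T v) u))
    (hPT : ∀ v : V, P (T v) = T (α v)) :
    (∀ u v w : V,
      circT ρ φ T (circT ρ φ T u v) w - circT ρ φ T u (circT ρ φ T v w)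
        = circT ρ φ T (circT ρ φ T v u) w - circT ρ φ T v (circT ρ φ T u w)) ∧
    (∀ u v : V,
      circT ρ φ T (α u) (α v) = α (circT ρ φ T (α u) v) ∧
      circT ρ φ T (α u) (α v) = α (circT ρ φ T u (α v))) := by
  have hTcirc : ∀ u v : V, T (circT ρ φ T u v) = mul (T u) (T v) := fun u v => (hT u v).symm
  refine ⟨fun u v w => ?_, fun u v => ⟨?_, ?_⟩⟩
  · have h1 := hrep1 (T u) (T v) w
    rw [map_sub, LinearMap.sub_apply] at h1
    have key : ∀ a b c : V, circT ρ φ T (circT ρ φ T a b) c - circT ρ φ T a (circT ρ φ T b c)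
        = ρ (mul (T a) (T b)) c - ρ (T a) (ρ (T b) c)
          + (φ (T c) (ρ (T a) b) + φ (T c) (ρ (T b) a)
            - ρ (T a) (φ (T c) b) - ρ (T b) (φ (T c) a)) := by
      intro a b c
      have e1 : circT ρ φ T (circT ρ φ T a b) c
          = ρ (mul (T a) (T b)) c + φ (T c) (ρ (T a) b + φ (T b) a) := by
        rw [← hTcirc]; rfl
      have e2 : circT ρ φ T a (circT ρ φ T b c)
          = ρ (T a) (ρ (T b) c + φ (T c) b) + φ (mul (T b) (T c)) a := by
        rw [← hTcirc]; rfl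
      rw [e1, e2, hrep2, map_add, map_add]
      abel
    rw [key, key]
    have h2 : ρ (mul (T u) (T v)) w - ρ (T u) (ρ (T v) w)
        = ρ (mul (T v) (T u)) w - ρ (T v) (ρ (T u) w) := by
      rw [sub_eq_sub_iff_add_eq_add] at h1 ⊢
      rw [h1]; abel
    rw [h2]
    abel
  · simp only [circT, ← hPT, map_add]
    rw [(halpha1 _ _).1, (halpha2 _ _).1, (halpha2 _ _).2]
  · simp only [circT, ← hPT, map_add]
    rw [(halpha1 _ _).1, (halpha2 _ _).1, (halpha1 _ _).2]

end Stmt12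
end

section
/- Let T : V → A be a relative Rota-Baxter operator on an averaging pre-Lie algebra ((A,∘),P) with respect to a representation ((V,ρ,φ),α), i.e. T(u)∘T(v) = T(ρ(T(u))v + φ(T(v))u) and P∘T = T∘α. Let ((V,∘_T),α) be the descendent averaging pre-Lie algebra with u ∘_T v := ρ(T(u))v + φ(T(v))u, and define ρ',φ' : V → End(A) by ρ'(u)x := −T(φ(x)u) + T(u)∘x and φ'(u)x := −T(ρ(x)u) + x∘T(u). Then ((A,ρ',φ'),P) is a representation of the averaging pre-Lie algebra ((V,∘_T),α). -/
namespace Stmt13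

variable {k A V : Type*} [Field k] [CharZero k]
  [AddCommGroup A] [Module k A] [AddCommGroup V] [Module k V]

/-- The descendent product `u ∘_T v := ρ(T(u))v + φ(T(v))u` on `V`. -/
def circT (ρ φ : A →ₗ[k] Module.End k V) (T : V →ₗ[k] A) (u v : V) : V :=
  ρ (T u) v + φ (T v) u

/-- `ρ'(u)x := −T(φ(x)u) + T(u)∘x`. -/
def rho' (mul : A →ₗ[k] A →ₗ[k] A) (ρ φ : A →ₗ[k] Module.End k V)
    (T : V →ₗ[k] A) (u : V) (x : A) : A :=
  -(T (φ x u)) + mul (T u) x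

/-- `φ'(u)x := −T(ρ(x)u) + x∘T(u)`. -/
def phi' (mul : A →ₗ[k] A →ₗ[k] A) (ρ φ : A →ₗ[k] Module.End k V)
    (T : V →ₗ[k] A) (u : V) (x : A) : A :=
  -(T (ρ x u)) + mul x (T u)

/-- Let `T : V → A` be a relative Rota-Baxter operator on an averaging pre-Lie algebra
`((A,∘),P)` with respect to a representation `((V,ρ,φ),α)`.  Then `((A,ρ',φ'),P)` is a
representation of the descendent averaging pre-Lie algebra `((V,∘_T),α)`. -/
theorem rep_on_A_of_relative_RB
    (mul : A →ₗ[k] A →ₗ[k] A) (P : A →ₗ[k] A)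
    (ρ φ : A →ₗ[k] Module.End k V) (α : V →ₗ[k] V) (T : V →ₗ[k] A)
    (hpre : ∀ x y z : A,
      mul (mul x y) z - mul x (mul y z) = mul (mul y x) z - mul y (mul x z))
    (havg1 : ∀ x y : A, mul (P x) (P y) = P (mul (P x) y))
    (havg2 : ∀ x y : A, mul (P x) (P y) = P (mul x (P y)))
    (hrep1 : ∀ (x y : A) (v : V), ρ (mul x y - mul y x) v = ρ x (ρ y v) - ρ y (ρ x v))
    (hrep2 : ∀ (x y : A) (v : V),
      φ (mul x y) v = ρ x (φ y v) - φ y (ρ x v) + φ y (φ x v))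
    (halpha1 : ∀ (x : A) (v : V),
      ρ (P x) (α v) = α (ρ (P x) v) ∧ α (ρ (P x) v) = α (ρ x (α v)))
    (halpha2 : ∀ (x : A) (v : V),
      φ (P x) (α v) = α (φ (P x) v) ∧ α (φ (P x) v) = α (φ x (α v)))
    (hT : ∀ u v : V, mul (T u) (T v) = T (ρ (T u) v + φ (T v) u))
    (hPT : ∀ v : V, P (T v) = T (α v)) :
    -- `(A,ρ',φ')` is a representation of the pre-Lie algebra `(V,∘_T)`
    (∀ (u v : V) (x : A),
      rho' mul ρ φ T (circT ρ φ T u v - circT ρ φ T v u) x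
        = rho' mul ρ φ T u (rho' mul ρ φ T v x) - rho' mul ρ φ T v (rho' mul ρ φ T u x)) ∧
    (∀ (u v : V) (x : A),
      phi' mul ρ φ T (circT ρ φ T u v) x
        = rho' mul ρ φ T u (phi' mul ρ φ T v x) - phi' mul ρ φ T v (rho' mul ρ φ T u x)
          + phi' mul ρ φ T v (phi' mul ρ φ T u x)) ∧
    -- compatibility of `P` with `α` through `ρ'` and `φ'`
    (∀ (u : V) (x : A),
      rho' mul ρ φ T (α u) (P x) = P (rho' mul ρ φ T (α u) x) ∧
      P (rho' mul ρ φ T (α u) x) = P (rho' mul ρ φ T u (P x))) ∧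
    (∀ (u : V) (x : A),
      phi' mul ρ φ T (α u) (P x) = P (phi' mul ρ φ T (α u) x) ∧
      P (phi' mul ρ φ T (α u) x) = P (phi' mul ρ φ T u (P x))) := by
  have hT' : ∀ u v : V, mul (T u) (T v) = T (ρ (T u) v) + T (φ (T v) u) := by
    intro u v; rw [hT, map_add]
  refine ⟨?_, ?_, ?_, ?_⟩
  · intro u v x
    have e1 := hpre (T u) (T v) x
    have e2 := congrArg T (hrep2 (T u) x v)
    have e3 := congrArg T (hrep2 (T v) x u)
    have e4 := hT' u (φ x v)
    have e5 := hT' v (φ x u)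
    have e6 := congrArg (fun a => mul a x) (hT' u v)
    have e7 := congrArg (fun a => mul a x) (hT' v u)
    simp only [rho', circT, map_add, map_sub, map_neg, LinearMap.add_apply,
      LinearMap.sub_apply, LinearMap.neg_apply] at *
    rw [e2, e3, e4, e5]
    rw [e6, e7] at e1
    linear_combination (norm := module) e1
  · intro u v x
    have e1 := hpre (T u) x (T v)
    have e2 := congrArg T (hrep2 x (T v) u)
    have e3 := congrArg T (hrep1 (T u) x v)
    have e4 := hT' u (ρ x v)
    have e5 := hT' (φ x u) v
    have e6 := hT' (ρ x u) v
    have e7 := congrArg (fun a => mul x a) (hT' u v)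
    simp only [rho', phi', circT, map_add, map_sub, map_neg, LinearMap.add_apply,
      LinearMap.sub_apply, LinearMap.neg_apply] at *
    rw [e2, e4, e5, e6]
    rw [e7] at e1
    linear_combination (norm := module) e1 - e3
  · intro u x
    have a := halpha2 x u
    simp only [rho', map_add, map_neg, hPT, ← havg1, ← havg2, ← a.1, ← a.2]
    constructor <;> simp only [← hPT, ← havg1, ← havg2, a.1, a.2]
  · intro u x
    have a := halpha1 x u
    simp only [phi', map_add, map_neg, hPT, ← havg1, ← havg2, ← a.1, ← a.2]
    constructor <;> simp only [← hPT, ← havg1, ← havg2, a.1, a.2]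

end Stmt13
end

section
/- Let ((A,∘),P,ω) be a finite-dimensional quadratic averaging pre-Lie algebra (ω nondegenerate, skew-symmetric, satisfying ω(x∘y,z) + ω(y, x∘z − z∘x) = 0 and ω(P(x),y) = ω(x,P(y))), and let T : A* → A be a linear map. Then T is a relative Rota-Baxter operator on ((A,∘),P) with respect to the coregular representation ((A*, L*−R*, −R*), P*) — i.e. T(ξ)∘T(η) = T((L*−R*)(T(ξ))η − R*(T(η))ξ) for all ξ,η ∈ A* and P∘T = T∘P* — if and only if T∘ω♯ is a Rota-Baxter operator of weight 0 on the averaging pre-Lie algebra ((A,∘),P), i.e. (T∘ω♯)(x)∘(T∘ω♯)(y) = (T∘ω♯)((T∘ω♯)(x)∘y + x∘(T∘ω♯)(y)) for all x,y ∈ A and P∘(T∘ω♯) = (T∘ω♯)∘P, where ω♯ : A → A* is defined by ⟨ω♯(x),y⟩ = ω(x,y). -/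
namespace Stmt14

variable {k A : Type*} [Field k] [CharZero k] [AddCommGroup A] [Module k A]

/-- Transpose a family of endomorphisms of `A` to a family of endomorphisms of `A*`.
With `L = mul` and `R = mul.flip`, `L* − R* = dualTr (R − L)` and `−R* = dualTr R`. -/
noncomputable def dualTr (f : A →ₗ[k] Module.End k A) :
    A →ₗ[k] Module.End k (Module.Dual k A) :=
  (Module.Dual.transpose (R := k)).comp f

/-- Let `((A,∘),P,ω)` be a finite-dimensional quadratic averaging pre-Lie algebra and
`T : A* → A` linear.  Then `T` is a relative Rota-Baxter operator on `((A,∘),P)` with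
respect to the coregular representation `((A*,L*−R*,−R*),P*)` if and only if `T∘ω♯` is
a Rota-Baxter operator of weight `0` on the averaging pre-Lie algebra `((A,∘),P)`. -/
theorem relative_RB_iff_RB [FiniteDimensional k A]
    (mul : A →ₗ[k] A →ₗ[k] A) (P : A →ₗ[k] A) (ω : A →ₗ[k] Module.Dual k A)
    (T : Module.Dual k A →ₗ[k] A)
    (hpre : ∀ x y z : A,
      mul (mul x y) z - mul x (mul y z) = mul (mul y x) z - mul y (mul x z))
    (havg1 : ∀ x y : A, mul (P x) (P y) = P (mul (P x) y))
    (havg2 : ∀ x y : A, mul (P x) (P y) = P (mul x (P y)))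
    (hskew : ∀ x y : A, ω x y = -(ω y x))
    (hnondeg : ∀ x : A, (∀ y : A, ω x y = 0) → x = 0)
    (hinv : ∀ x y z : A, ω (mul x y) z + ω y (mul x z - mul z x) = 0)
    (hcomp : ∀ x y : A, ω (P x) y = ω x (P y)) :
    ((∀ ξ η : Module.Dual k A,
        mul (T ξ) (T η)
          = T (dualTr (mul.flip - mul) (T ξ) η + dualTr mul.flip (T η) ξ)) ∧
      (∀ ξ : Module.Dual k A, P (T ξ) = T (P.dualMap ξ)))
      ↔
    ((∀ x y : A,
        mul (T (ω x)) (T (ω y))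
          = T (ω (mul (T (ω x)) y + mul x (T (ω y))))) ∧
      (∀ x : A, P (T (ω x)) = T (ω (P x)))) := by
  have hinj : Function.Injective ω := by
    rw [injective_iff_map_eq_zero]
    intro x hx
    exact hnondeg x (fun y => by rw [hx]; rfl)
  have hsurj : Function.Surjective ω :=
    (LinearMap.injective_iff_surjective_of_finrank_eq_finrank
      (Subspace.dual_finrank_eq (K := k) (V := A)).symm).1 hinj
  have h1 : ∀ a y : A, dualTr (mul.flip - mul) a (ω y) = ω (mul a y) := by
    intro a y
    ext z
    have h := hinv a y z
    have e : dualTr (mul.flip - mul) a (ω y) z = ω y (mul z a - mul a z) := rfl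
    rw [e]
    simp only [map_sub] at h ⊢
    linear_combination -h
  have h2 : ∀ b x : A, dualTr mul.flip b (ω x) = ω (mul x b) := by
    intro b x
    ext z
    have e : dualTr mul.flip b (ω x) z = ω x (mul z b) := rfl
    rw [e]
    have h := hinv x b z
    have h' := hinv z b x
    have hs := hskew x (mul z b)
    simp only [map_sub] at h h'
    linear_combination hs - h - h'
  have h3 : ∀ x : A, P.dualMap (ω x) = ω (P x) := by
    intro x
    ext z
    exact (hcomp x z).symm
  rw [hsurj.forall₂, hsurj.forall]
  simp only [h1, h2, h3, map_add]

end Stmt14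
end

section
/- Let A be a finite-dimensional vector space, Δ : A → A⊗A a linear map making (A,Δ) a pre-Lie coalgebra, and S : A → A a linear map with (S⊗S)Δ(x) = (S⊗id)Δ(S(x)) = (id⊗S)Δ(S(x)) for all x ∈ A. Define δ := Δ − τ∘Δ, where τ(a⊗b) = b⊗a. Then ((A,δ),S) is an averaging Lie coalgebra: δ is antisymmetric (δ = −τ∘δ), δ satisfies the co-Jacobi identity (id + σ + σ²)(id⊗δ)δ = 0 where σ(x⊗y⊗z) = z⊗x⊗y, and (S⊗S)δ(x) = (S⊗id)δ(S(x)) = (id⊗S)δ(S(x)) for all x ∈ A. -/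
open TensorProduct

namespace Stmt15

variable {k A : Type*} [Field k] [CharZero k] [AddCommGroup A] [Module k A]

/-- The flip `τ : A⊗A → A⊗A`, `τ(a⊗b) = b⊗a`. -/
noncomputable def τ (k A : Type*) [Field k] [AddCommGroup A] [Module k A] :
    A ⊗[k] A →ₗ[k] A ⊗[k] A :=
  (TensorProduct.comm k A A).toLinearMap

/-- `τ ⊗ id` on `(A⊗A)⊗A`. -/
noncomputable def τ12 (k A : Type*) [Field k] [AddCommGroup A] [Module k A] :
    (A ⊗[k] A) ⊗[k] A →ₗ[k] (A ⊗[k] A) ⊗[k] A :=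
  TensorProduct.map (τ k A) LinearMap.id

/-- `(Δ ⊗ id) ∘ Δ : A → (A⊗A)⊗A`. -/
noncomputable def coL (Δ : A →ₗ[k] A ⊗[k] A) : A →ₗ[k] (A ⊗[k] A) ⊗[k] A :=
  (TensorProduct.map Δ LinearMap.id).comp Δ

/-- `(id ⊗ Δ) ∘ Δ : A → (A⊗A)⊗A` (re-associated). -/
noncomputable def coR (Δ : A →ₗ[k] A ⊗[k] A) : A →ₗ[k] (A ⊗[k] A) ⊗[k] A :=
  ((TensorProduct.assoc k A A A).symm.toLinearMap.comp
    (TensorProduct.map LinearMap.id Δ)).comp Δ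

/-- The cyclic permutation `σ : A⊗(A⊗A) → A⊗(A⊗A)`, `σ(x⊗(y⊗z)) = z⊗(x⊗y)`. -/
noncomputable def σ (k A : Type*) [Field k] [AddCommGroup A] [Module k A] :
    A ⊗[k] (A ⊗[k] A) →ₗ[k] A ⊗[k] (A ⊗[k] A) :=
  (TensorProduct.comm k (A ⊗[k] A) A).toLinearMap.comp
    (TensorProduct.assoc k A A A).symm.toLinearMap

/-- `δ := Δ − τ∘Δ`. -/
noncomputable def δof (Δ : A →ₗ[k] A ⊗[k] A) : A →ₗ[k] A ⊗[k] A :=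
  Δ - (τ k A).comp Δ

/-- The cyclic sum `id + σ + σ²`. -/
noncomputable def cyc (k A : Type*) [Field k] [AddCommGroup A] [Module k A] :
    A ⊗[k] (A ⊗[k] A) →ₗ[k] A ⊗[k] (A ⊗[k] A) :=
  LinearMap.id + σ k A + (σ k A).comp (σ k A)

/-- `id ⊗ τ`. -/
noncomputable def τ23 (k A : Type*) [Field k] [AddCommGroup A] [Module k A] :
    A ⊗[k] (A ⊗[k] A) →ₗ[k] A ⊗[k] (A ⊗[k] A) :=
  TensorProduct.map LinearMap.id (τ k A)

lemma cyc_one (z : (A ⊗[k] A) ⊗[k] A) :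
    cyc k A (TensorProduct.assoc k A A A z - τ23 k A (TensorProduct.assoc k A A A z))
      = cyc k A (TensorProduct.assoc k A A A (z - τ12 k A z)) := by
  have : (cyc k A).comp ((LinearMap.id - τ23 k A).comp (TensorProduct.assoc k A A A).toLinearMap)
      = (cyc k A).comp ((TensorProduct.assoc k A A A).toLinearMap.comp
        (LinearMap.id - τ12 k A)) := by
    ext a b c
    simp [cyc, τ23, τ12, σ, τ]
    abel
  simpa using LinearMap.congr_fun this z

lemma cyc_two (z : (A ⊗[k] A) ⊗[k] A) :
    cyc k A (TensorProduct.comm k _ _ z - τ23 k A (TensorProduct.comm k _ _ z))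
      = cyc k A (TensorProduct.assoc k A A A (z - τ12 k A z)) := by
  have : (cyc k A).comp ((LinearMap.id - τ23 k A).comp
        (TensorProduct.comm k (A ⊗[k] A) A).toLinearMap)
      = (cyc k A).comp ((TensorProduct.assoc k A A A).toLinearMap.comp
        (LinearMap.id - τ12 k A)) := by
    ext a b c
    simp [cyc, τ23, τ12, σ, τ]
    abel
  simpa using LinearMap.congr_fun this z

lemma map_δ (Δ : A →ₗ[k] A ⊗[k] A) (t : A ⊗[k] A) :
    TensorProduct.map LinearMap.id (δof Δ) t
      = TensorProduct.map LinearMap.id Δ t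
        - τ23 k A (TensorProduct.map LinearMap.id Δ t) := by
  induction t with
  | zero => simp
  | tmul a b => simp [δof, τ23, TensorProduct.tmul_sub]
  | add a b ha hb => simp only [map_add, ha, hb]; abel

lemma map_τ (f g : A →ₗ[k] A) (t : A ⊗[k] A) :
    TensorProduct.map f g (τ k A t) = τ k A (TensorProduct.map g f t) := by
  induction t with
  | zero => simp
  | tmul a b => simp [τ]
  | add a b ha hb => simp only [map_add, ha, hb]

lemma map_Δ_τ (Δ : A →ₗ[k] A ⊗[k] A) (t : A ⊗[k] A) :
    TensorProduct.map LinearMap.id Δ (τ k A t)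
      = TensorProduct.comm k _ _ (TensorProduct.map Δ LinearMap.id t) := by
  induction t with
  | zero => simp
  | tmul a b => simp [τ]
  | add a b ha hb => simp only [map_add, ha, hb]

lemma cyc_δ (Δ : A →ₗ[k] A ⊗[k] A) (x : A)
    (h : coL Δ x - coR Δ x = τ12 k A (coL Δ x) - τ12 k A (coR Δ x)) :
    cyc k A (TensorProduct.map LinearMap.id (δof Δ) (δof Δ x)) = 0 := by
  have e : δof Δ x = Δ x - τ k A (Δ x) := rfl
  have hR : TensorProduct.map LinearMap.id Δ (Δ x)
      = TensorProduct.assoc k A A A (coR Δ x) := by simp [coR]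
  have hL : TensorProduct.map Δ LinearMap.id (Δ x) = coL Δ x := rfl
  rw [e, map_sub, map_δ, map_δ, map_Δ_τ, map_sub, hR, hL, cyc_one, cyc_two, ← map_sub, ← map_sub]
  have : coR Δ x - τ12 k A (coR Δ x) - (coL Δ x - τ12 k A (coL Δ x)) = 0 := by
    rw [← sub_eq_zero] at h
    rw [← neg_eq_zero, ← h]; abel
  rw [this]; simp

/-- Let `(A,Δ)` be a finite-dimensional pre-Lie coalgebra and `S : A → A` linear with
`(S⊗S)Δ(x) = (S⊗id)Δ(S(x)) = (id⊗S)Δ(S(x))`.  Then `((A, δ := Δ − τΔ), S)` is an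
averaging Lie coalgebra: `δ` is antisymmetric, satisfies the co-Jacobi identity, and
`(S⊗S)δ(x) = (S⊗id)δ(S(x)) = (id⊗S)δ(S(x))`. -/
theorem averaging_Lie_coalgebra_of_preLie [FiniteDimensional k A]
    (Δ : A →ₗ[k] A ⊗[k] A) (S : A →ₗ[k] A)
    (hco : ∀ x : A,
      coL Δ x - coR Δ x = τ12 k A (coL Δ x) - τ12 k A (coR Δ x))
    (hS : ∀ x : A,
      TensorProduct.map S S (Δ x) = TensorProduct.map S LinearMap.id (Δ (S x)) ∧
      TensorProduct.map S LinearMap.id (Δ (S x))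
        = TensorProduct.map LinearMap.id S (Δ (S x))) :
    (∀ x : A, δof Δ x = -(τ k A (δof Δ x))) ∧
    (∀ x : A,
      TensorProduct.map LinearMap.id (δof Δ) (δof Δ x)
        + σ k A (TensorProduct.map LinearMap.id (δof Δ) (δof Δ x))
        + σ k A (σ k A (TensorProduct.map LinearMap.id (δof Δ) (δof Δ x))) = 0) ∧
    (∀ x : A,
      TensorProduct.map S S (δof Δ x)
        = TensorProduct.map S LinearMap.id (δof Δ (S x)) ∧
      TensorProduct.map S LinearMap.id (δof Δ (S x))
        = TensorProduct.map LinearMap.id S (δof Δ (S x))) := by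
  refine ⟨fun x => ?_, fun x => ?_, fun x => ?_⟩
  · simp [δof, τ]
  · simpa [cyc] using cyc_δ Δ x (hco x)
  · obtain ⟨h1, h2⟩ := hS x
    have e : ∀ y, δof Δ y = Δ y - τ k A (Δ y) := fun _ => rfl
    simp only [e, map_sub, map_τ, h1, h2, and_self]

end Stmt15
end

section
/- Let (A,∘,Δ,P,S) be a finite-dimensional averaging pre-Lie bialgebra. Define [x,y] := x∘y − y∘x and δ(x) := Δ(x) − τ(Δ(x)), where τ(a⊗b) = b⊗a. Then (A,[·,·],δ,P,S) is an averaging Lie bialgebra if and only if (A,∘,Δ) is balanced, i.e., writing Δ(x) = Σ x₍₁₎⊗x₍₂₎, one has Σ x₍₁₎∘y ⊗ x₍₂₎ + Σ y₍₂₎ ⊗ y₍₁₎∘x = Σ y₍₁₎∘x ⊗ y₍₂₎ + Σ x₍₂₎ ⊗ x₍₁₎∘y for all x,y ∈ A. -/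
open TensorProduct

namespace Stmt16

variable {k A : Type*} [Field k] [CharZero k] [AddCommGroup A] [Module k A]

/-- The flip `τ : A⊗A → A⊗A`, `τ(a⊗b) = b⊗a`. -/
noncomputable def τ (k A : Type*) [Field k] [AddCommGroup A] [Module k A] :
    A ⊗[k] A →ₗ[k] A ⊗[k] A :=
  (TensorProduct.comm k A A).toLinearMap

/-- `τ ⊗ id` on `(A⊗A)⊗A`. -/
noncomputable def τ12 (k A : Type*) [Field k] [AddCommGroup A] [Module k A] :
    (A ⊗[k] A) ⊗[k] A →ₗ[k] (A ⊗[k] A) ⊗[k] A :=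
  TensorProduct.map (τ k A) LinearMap.id

/-- `(Δ ⊗ id) ∘ Δ : A → (A⊗A)⊗A`. -/
noncomputable def coL (Δ : A →ₗ[k] A ⊗[k] A) : A →ₗ[k] (A ⊗[k] A) ⊗[k] A :=
  (TensorProduct.map Δ LinearMap.id).comp Δ

/-- `(id ⊗ Δ) ∘ Δ : A → (A⊗A)⊗A` (re-associated). -/
noncomputable def coR (Δ : A →ₗ[k] A ⊗[k] A) : A →ₗ[k] (A ⊗[k] A) ⊗[k] A :=
  ((TensorProduct.assoc k A A A).symm.toLinearMap.comp
    (TensorProduct.map LinearMap.id Δ)).comp Δ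

/-- The cyclic permutation `σ : A⊗(A⊗A) → A⊗(A⊗A)`, `σ(x⊗(y⊗z)) = z⊗(x⊗y)`. -/
noncomputable def σ (k A : Type*) [Field k] [AddCommGroup A] [Module k A] :
    A ⊗[k] (A ⊗[k] A) →ₗ[k] A ⊗[k] (A ⊗[k] A) :=
  (TensorProduct.comm k (A ⊗[k] A) A).toLinearMap.comp
    (TensorProduct.assoc k A A A).symm.toLinearMap

/-- `δ := Δ − τ∘Δ`. -/
noncomputable def δof (Δ : A →ₗ[k] A ⊗[k] A) : A →ₗ[k] A ⊗[k] A :=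
  Δ - (τ k A).comp Δ

/-- The commutator bracket `[x,y] := x∘y − y∘x`. -/
def brk (mul : A →ₗ[k] A →ₗ[k] A) (x y : A) : A := mul x y - mul y x

/-- `ad_x = L_x − R_x` as an endomorphism. -/
def ad (mul : A →ₗ[k] A →ₗ[k] A) (x : A) : A →ₗ[k] A := mul x - mul.flip x

lemma τ_map (f g : A →ₗ[k] A) (t : A ⊗[k] A) :
    TensorProduct.map f g (τ k A t) = τ k A (TensorProduct.map g f t) := by
  induction t using TensorProduct.induction_on with
  | zero => simp
  | tmul a b => simp [τ]
  | add a b ha hb => simp only [map_add, ha, hb]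

lemma τ_τ (t : A ⊗[k] A) : τ k A (τ k A t) = t := by
  simp [τ]

/-- Sum over cyclic permutations. -/
noncomputable def cyc3 (k A : Type*) [Field k] [AddCommGroup A] [Module k A] :
    A ⊗[k] (A ⊗[k] A) →ₗ[k] A ⊗[k] (A ⊗[k] A) :=
  LinearMap.id + σ k A + (σ k A).comp (σ k A)

/-- `id - id ⊗ τ`. -/
noncomputable def sk23 (k A : Type*) [Field k] [AddCommGroup A] [Module k A] :
    A ⊗[k] (A ⊗[k] A) →ₗ[k] A ⊗[k] (A ⊗[k] A) :=
  LinearMap.id - TensorProduct.map LinearMap.id (τ k A)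

/-- Signed sum over all six permutations. -/
noncomputable def alt3 (k A : Type*) [Field k] [AddCommGroup A] [Module k A] :
    (A ⊗[k] A) ⊗[k] A →ₗ[k] A ⊗[k] (A ⊗[k] A) :=
  (cyc3 k A).comp
    ((sk23 k A).comp
      (TensorProduct.assoc k A A A).toLinearMap)

lemma alt3_τ12 (t : (A ⊗[k] A) ⊗[k] A) : alt3 k A (τ12 k A t) = - alt3 k A t := by
  have h : (alt3 k A).comp (τ12 k A) = - alt3 k A := by
    ext a b c
    simp [alt3, cyc3, sk23, τ12, τ, σ]
    abel
  exact LinearMap.congr_fun h t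

lemma cyc_comm (t : (A ⊗[k] A) ⊗[k] A) :
    (cyc3 k A)
      ((sk23 k A)
        (TensorProduct.comm k (A ⊗[k] A) A t)) = alt3 k A t := by
  have h : (cyc3 k A).comp
      ((sk23 k A).comp
        (TensorProduct.comm k (A ⊗[k] A) A).toLinearMap) = alt3 k A := by
    ext a b c
    simp [alt3, cyc3, sk23, τ, σ]
    abel
  exact LinearMap.congr_fun h t

lemma map_δ (Δ : A →ₗ[k] A ⊗[k] A) (t : A ⊗[k] A) :
    TensorProduct.map LinearMap.id (δof Δ) t
      = (sk23 k A)
          (TensorProduct.map LinearMap.id Δ t) := by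
  induction t using TensorProduct.induction_on with
  | zero => simp
  | tmul a b => simp [δof, sk23, TensorProduct.tmul_sub]
  | add a b ha hb => simp only [map_add, ha, hb]

lemma map_Δ_τ (Δ : A →ₗ[k] A ⊗[k] A) (t : A ⊗[k] A) :
    TensorProduct.map LinearMap.id Δ (τ k A t)
      = TensorProduct.comm k (A ⊗[k] A) A (TensorProduct.map Δ LinearMap.id t) := by
  induction t using TensorProduct.induction_on with
  | zero => simp
  | tmul a b => simp [τ]
  | add a b ha hb => simp only [map_add, ha, hb]

lemma coJacobi (Δ : A →ₗ[k] A ⊗[k] A) (x : A)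
    (hco : coL Δ x - coR Δ x = τ12 k A (coL Δ x) - τ12 k A (coR Δ x)) :
    TensorProduct.map LinearMap.id (δof Δ) (δof Δ x)
          + σ k A (TensorProduct.map LinearMap.id (δof Δ) (δof Δ x))
          + σ k A (σ k A (TensorProduct.map LinearMap.id (δof Δ) (δof Δ x))) = 0 := by
  change cyc3 k A
    (TensorProduct.map LinearMap.id (δof Δ) (δof Δ x)) = 0
  have hR : TensorProduct.map LinearMap.id Δ (Δ x)
      = TensorProduct.assoc k A A A (coR Δ x) := by simp [coR]
  have hd : δof Δ x = Δ x - τ k A (Δ x) := rfl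
  have h1 : (cyc3 k A)
      (TensorProduct.map LinearMap.id (δof Δ) (δof Δ x))
      = alt3 k A (coR Δ x) - alt3 k A (coL Δ x) := by
    rw [map_δ, hd, map_sub (TensorProduct.map LinearMap.id Δ), map_Δ_τ, hR, map_sub, map_sub]
    congr 1
    exact cyc_comm (coL Δ x)
  rw [h1]
  have h2 := congrArg (alt3 k A) hco
  simp only [map_sub, alt3_τ12] at h2
  have h3 : (2 : k) • (alt3 k A (coR Δ x) - alt3 k A (coL Δ x)) = 0 := by
    rw [two_smul]
    generalize alt3 k A (coR Δ x) = a at *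
    generalize alt3 k A (coL Δ x) = b at *
    have h4 : a - b = -(b - a) := by abel
    rw [h4]
    nth_rewrite 1 [h2]
    abel
  exact (smul_eq_zero.mp h3).resolve_left two_ne_zero

lemma map_ad_left (mul : A →ₗ[k] A →ₗ[k] A) (x : A) (t : A ⊗[k] A) :
    TensorProduct.map (ad mul x) LinearMap.id t
      = TensorProduct.map (mul x) LinearMap.id t
        - TensorProduct.map (mul.flip x) LinearMap.id t := by
  induction t using TensorProduct.induction_on with
  | zero => simp
  | tmul a b => simp [ad, TensorProduct.sub_tmul]
  | add a b ha hb =>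
    simp only [map_add, ha, hb]
    abel

lemma compat_iff (mul : A →ₗ[k] A →ₗ[k] A) (Δ : A →ₗ[k] A ⊗[k] A) (x y : A)
    (hbi1 : Δ (mul x y - mul y x)
        = (TensorProduct.map (mul x) LinearMap.id (Δ y)
            + TensorProduct.map LinearMap.id (ad mul x) (Δ y))
          - (TensorProduct.map (mul y) LinearMap.id (Δ x)
            + TensorProduct.map LinearMap.id (ad mul y) (Δ x))) :
    (δof Δ (brk mul x y)
          = (TensorProduct.map (ad mul x) LinearMap.id (δof Δ y)
              + TensorProduct.map LinearMap.id (ad mul x) (δof Δ y))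
            - (TensorProduct.map (ad mul y) LinearMap.id (δof Δ x)
              + TensorProduct.map LinearMap.id (ad mul y) (δof Δ x))) ↔
      (TensorProduct.map (mul.flip y) LinearMap.id (Δ x)
          + τ k A (TensorProduct.map (mul.flip x) LinearMap.id (Δ y))
        = TensorProduct.map (mul.flip x) LinearMap.id (Δ y)
          + τ k A (TensorProduct.map (mul.flip y) LinearMap.id (Δ x))) := by
  have hd : ∀ z, δof Δ z = Δ z - τ k A (Δ z) := fun _ => rfl
  have hb : brk mul x y = mul x y - mul y x := rfl
  rw [hb, hd, hbi1, hd, hd]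
  simp only [map_sub, map_add, τ_map, map_ad_left]
  rw [← sub_eq_zero, ← sub_eq_zero (b := _ + τ k A (TensorProduct.map (mul.flip y) _ _))]
  rw [← neg_eq_zero]
  constructor <;> intro h <;> rw [← h] <;> abel

/-- Let `(A,∘,Δ,P,S)` be a finite-dimensional averaging pre-Lie bialgebra.  With
`[x,y] := x∘y − y∘x` and `δ := Δ − τΔ`, the quintuple `(A,[·,·],δ,P,S)` is an averaging
Lie bialgebra if and only if `(A,∘,Δ)` is balanced. -/
theorem averaging_Lie_bialgebra_iff_balanced [FiniteDimensional k A]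
    (mul : A →ₗ[k] A →ₗ[k] A) (Δ : A →ₗ[k] A ⊗[k] A) (P S : A →ₗ[k] A)
    -- `((A,∘),P)` is an averaging pre-Lie algebra
    (hpre : ∀ x y z : A,
      mul (mul x y) z - mul x (mul y z) = mul (mul y x) z - mul y (mul x z))
    (havg1 : ∀ x y : A, mul (P x) (P y) = P (mul (P x) y))
    (havg2 : ∀ x y : A, mul (P x) (P y) = P (mul x (P y)))
    -- `((A,Δ),S)` is an averaging pre-Lie coalgebra
    (hco : ∀ x : A,
      coL Δ x - coR Δ x = τ12 k A (coL Δ x) - τ12 k A (coR Δ x))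
    (hcoavg : ∀ x : A,
      TensorProduct.map S S (Δ x) = TensorProduct.map S LinearMap.id (Δ (S x)) ∧
      TensorProduct.map S LinearMap.id (Δ (S x))
        = TensorProduct.map LinearMap.id S (Δ (S x)))
    -- `(A,∘,Δ)` is a pre-Lie bialgebra
    (hbi1 : ∀ x y : A,
      Δ (mul x y - mul y x)
        = (TensorProduct.map (mul x) LinearMap.id (Δ y)
            + TensorProduct.map LinearMap.id (ad mul x) (Δ y))
          - (TensorProduct.map (mul y) LinearMap.id (Δ x)
            + TensorProduct.map LinearMap.id (ad mul y) (Δ x)))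
    (hbi2 : ∀ x y : A,
      Δ (mul x y) - τ k A (Δ (mul x y))
        = TensorProduct.map LinearMap.id (mul.flip y) (Δ x)
          - τ k A (TensorProduct.map LinearMap.id (mul.flip y) (Δ x))
          + (TensorProduct.map (mul x) LinearMap.id (Δ y)
              + TensorProduct.map LinearMap.id (mul x) (Δ y))
          - τ k A (TensorProduct.map (mul x) LinearMap.id (Δ y)
              + TensorProduct.map LinearMap.id (mul x) (Δ y)))
    -- `((A,∘),P)` is `S`-admissible
    (hadm1 : ∀ x y : A,
      mul (P x) (S y) = S (mul (P x) y) ∧ S (mul (P x) y) = S (mul x (S y)))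
    (hadm2 : ∀ x y : A,
      mul (S x) (P y) = S (mul x (P y)) ∧ S (mul x (P y)) = S (mul (S x) y))
    -- `((A*,Δ*),S*)` is `P*`-admissible
    (hPS1 : ∀ x : A,
      TensorProduct.map P S (Δ x) = TensorProduct.map LinearMap.id S (Δ (P x)) ∧
      TensorProduct.map LinearMap.id S (Δ (P x))
        = TensorProduct.map P LinearMap.id (Δ (P x)))
    (hPS2 : ∀ x : A,
      TensorProduct.map S P (Δ x) = TensorProduct.map S LinearMap.id (Δ (P x)) ∧
      TensorProduct.map S LinearMap.id (Δ (P x))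
        = TensorProduct.map LinearMap.id P (Δ (P x))) :
    -- `(A,[·,·],δ,P,S)` is an averaging Lie bialgebra iff `(A,∘,Δ)` is balanced
    (((∀ x : A, brk mul x x = 0) ∧
      (∀ x y z : A,
        brk mul (brk mul x y) z + brk mul (brk mul y z) x + brk mul (brk mul z x) y = 0)) ∧
     ((∀ x : A, δof Δ x = -(τ k A (δof Δ x))) ∧
      (∀ x : A,
        TensorProduct.map LinearMap.id (δof Δ) (δof Δ x)
          + σ k A (TensorProduct.map LinearMap.id (δof Δ) (δof Δ x))
          + σ k A (σ k A (TensorProduct.map LinearMap.id (δof Δ) (δof Δ x))) = 0)) ∧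
     (∀ x y : A,
        δof Δ (brk mul x y)
          = (TensorProduct.map (ad mul x) LinearMap.id (δof Δ y)
              + TensorProduct.map LinearMap.id (ad mul x) (δof Δ y))
            - (TensorProduct.map (ad mul y) LinearMap.id (δof Δ x)
              + TensorProduct.map LinearMap.id (ad mul y) (δof Δ x))) ∧
     (∀ x y : A,
        brk mul (P x) (P y) = P (brk mul (P x) y) ∧
        P (brk mul (P x) y) = P (brk mul x (P y))) ∧
     (∀ x : A,
        TensorProduct.map S S (δof Δ x)
          = TensorProduct.map S LinearMap.id (δof Δ (S x)) ∧
        TensorProduct.map S LinearMap.id (δof Δ (S x))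
          = TensorProduct.map LinearMap.id S (δof Δ (S x))) ∧
     (∀ x y : A,
        brk mul (P x) (S y) = S (brk mul (P x) y) ∧
        S (brk mul (P x) y) = S (brk mul x (S y))) ∧
     (∀ x : A,
        TensorProduct.map S P (δof Δ x)
          = TensorProduct.map S LinearMap.id (δof Δ (P x)) ∧
        TensorProduct.map S LinearMap.id (δof Δ (P x))
          = TensorProduct.map LinearMap.id P (δof Δ (P x))))
      ↔
    (∀ x y : A,
      TensorProduct.map (mul.flip y) LinearMap.id (Δ x)
          + τ k A (TensorProduct.map (mul.flip x) LinearMap.id (Δ y))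
        = TensorProduct.map (mul.flip x) LinearMap.id (Δ y)
          + τ k A (TensorProduct.map (mul.flip y) LinearMap.id (Δ x))) := by
  have hd : ∀ z, δof Δ z = Δ z - τ k A (Δ z) := fun _ => rfl
  constructor
  · rintro ⟨-, -, h, -⟩ x y
    exact (compat_iff mul Δ x y (hbi1 x y)).1 (h x y)
  · intro h
    refine ⟨⟨?_, ?_⟩, ⟨?_, fun x => coJacobi Δ x (hco x)⟩,
      fun x y => (compat_iff mul Δ x y (hbi1 x y)).2 (h x y), ?_, ?_, ?_, ?_⟩
    · intro x
      simp [brk]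
    · intro x y z
      have h1 := sub_eq_zero.mpr (hpre x y z)
      have h2 := sub_eq_zero.mpr (hpre y z x)
      have h3 := sub_eq_zero.mpr (hpre z x y)
      have h4 := congrArg₂ (· + ·) (congrArg₂ (· + ·) h1 h2) h3
      simp only [add_zero] at h4
      simp only [brk, map_sub, LinearMap.sub_apply]
      rw [← h4]
      abel
    · intro x
      rw [hd, map_sub, τ_τ]
      abel
    · intro x y
      simp only [brk, map_sub]
      rw [← havg1, ← havg2, ← havg1, ← havg2]
      exact ⟨rfl, rfl⟩
    · intro x
      obtain ⟨h1, h2⟩ := hcoavg x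
      simp only [hd, map_sub, τ_map]
      rw [h1, h2]
      exact ⟨rfl, rfl⟩
    · intro x y
      obtain ⟨h1, h2⟩ := hadm1 x y
      obtain ⟨h3, h4⟩ := hadm2 y x
      simp only [brk, map_sub]
      rw [h1, h3, h2, h4]
      exact ⟨rfl, rfl⟩
    · intro x
      obtain ⟨h1, h2⟩ := hPS1 x
      obtain ⟨h3, h4⟩ := hPS2 x
      simp only [hd, map_sub, τ_map]
      rw [h1, h3, h2, h4]
      exact ⟨rfl, rfl⟩

end Stmt16
end
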